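/- arXiv:2508.18838 — 2 statements merged into one kernel-verified Lean document; each statement's English description precedes it below -/
import Mathlib

section
/- Let d ≥ 1 and k ≥ 1, let G = (V,D) be a graph with no isolated vertices whose edge set D is a k-fold R_d-circuit with principal partition 𝒜, let u, x be two distinct technicolour vertices of G, and let G*v be the cone of G over a new vertex v, so that E(G*v) is a k-fold R_{d+1}-circuit. If (a) there exists z ∈ N_G(u) ∩ N_G(x) such that uz and xz belong to different parts of 𝒜, or (b) N_G(u) ∖ {x} ≠ N_G(x) ∖ {u}, then the edges vu and vx belong to different parts of the principal partition of E(G*v). -/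
open scoped BigOperators

/-- The row of the `d`-dimensional rigidity matrix of a realisation `p : V → ℝ^d`
indexed by the (unordered) edge `e`. -/
noncomputable def rigRow (d : ℕ) {V : Type*} [DecidableEq V]
    (p : V → Fin d → ℝ) (e : Sym2 V) : V × Fin d → ℝ :=
  Sym2.lift
    ⟨fun u v wi =>
        (((if wi.1 = u then (1 : ℝ) else 0) - (if wi.1 = v then (1 : ℝ) else 0)) *
          (p u wi.2 - p v wi.2)),
      fun u v => by funext wi; ring⟩ e

/-- A realisation is generic if the coordinates of the points form an algebraically
independent set over `ℚ`. -/
def Generic (d : ℕ) {V : Type*} (p : V → Fin d → ℝ) : Prop :=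
  AlgebraicIndependent ℚ fun vi : V × Fin d => p vi.1 vi.2

/-- `rrk d p F` : the rank of the set of rows of the rigidity matrix of `(K_V, p)`
indexed by the edges in `F`.  For generic `p` this is the rank function `r_d` of
the generic `d`-dimensional rigidity matroid. -/
noncomputable def rrk (d : ℕ) {V : Type*} [Fintype V] [DecidableEq V]
    (p : V → Fin d → ℝ) (F : Set (Sym2 V)) : ℕ :=
  Module.finrank ℝ (Submodule.span ℝ (rigRow d p '' F))

/-- `D` is a `k`-fold circuit (with respect to the realisation `p`) :
`r (D \ {f}) = r D` for every `f ∈ D`, and `r D = |D| - k`. -/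
def IsKFoldCircuit (d : ℕ) {V : Type*} [Fintype V] [DecidableEq V]
    (p : V → Fin d → ℝ) (D : Finset (Sym2 V)) (k : ℕ) : Prop :=
  (∀ f ∈ D, rrk d p (↑D \ {f}) = rrk d p ↑D) ∧ rrk d p ↑D + k = D.card

/-- An `R_d`-circuit: `r C = |C| - 1` and `r (C \ {f}) = r C` for all `f ∈ C`. -/
def IsCircuit (d : ℕ) {V : Type*} [Fintype V] [DecidableEq V]
    (p : V → Fin d → ℝ) (C : Finset (Sym2 V)) : Prop :=
  IsKFoldCircuit d p C 1

/-- `A` is a part of the principal partition of the `k`-fold circuit `D`: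
the parts are the sets `D \ B` where `B` runs over the `(k-1)`-fold circuits
contained in `D`. -/
def IsPrincipalPart (d : ℕ) {V : Type*} [Fintype V] [DecidableEq V]
    (p : V → Fin d → ℝ) (D : Finset (Sym2 V)) (k : ℕ) (A : Finset (Sym2 V)) : Prop :=
  ∃ B ⊆ D, IsKFoldCircuit d p B (k - 1) ∧ A = D \ B

/-- Closure in the rigidity matroid: all edges of `K_V` whose addition to `F`
does not increase the rank. -/
def rcl (d : ℕ) {V : Type*} [Fintype V] [DecidableEq V]
    (p : V → Fin d → ℝ) (F : Set (Sym2 V)) : Set (Sym2 V) :=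
  {e | ¬ e.IsDiag ∧ rrk d p (insert e F) = rrk d p F}

/-- A `k`-fold circuit `D` with principal partition `A_1, …, A_ℓ` is balanced if
`r_d (⋂ i, cl_d (D \ A_i)) = ℓ - k`. -/
def IsBalanced (d : ℕ) {V : Type*} [Fintype V] [DecidableEq V]
    (p : V → Fin d → ℝ) (D : Finset (Sym2 V)) (k : ℕ) : Prop :=
  rrk d p (⋂ A ∈ {A | IsPrincipalPart d p D k A}, rcl d p ↑(D \ A)) + k =
    Set.ncard {A | IsPrincipalPart d p D k A}

/-- A vertex is monochromatic if all edges of `D` incident with it lie in a single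
part of the principal partition (and technicolour otherwise). -/
def Monochromatic (d : ℕ) {V : Type*} [Fintype V] [DecidableEq V]
    (p : V → Fin d → ℝ) (D : Finset (Sym2 V)) (k : ℕ) (w : V) : Prop :=
  ∃ A, IsPrincipalPart d p D k A ∧ ∀ e ∈ D, w ∈ e → e ∈ A

/-- The graph `(W, E)` is `R_d`-rigid: it is a complete graph on at most `d+1`
vertices, or `r_d(E) = d|W| - (d+1 choose 2)`. -/
def IsRigidOn (d : ℕ) {V : Type*} [Fintype V] [DecidableEq V]
    (p : V → Fin d → ℝ) (W : Finset V) (E : Finset (Sym2 V)) : Prop :=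
  (W.card ≤ d + 1 ∧ ∀ u ∈ W, ∀ w ∈ W, u ≠ w → s(u, w) ∈ E) ∨
    (rrk d p ↑E : ℤ) + ((d + 1).choose 2 : ℤ) = (d : ℤ) * (W.card : ℤ)

/-- The edge set of the cone of (the graph with edge set) `D` over a new vertex,
realised as `none : Option V`. -/
def coneEdges {V : Type*} [Fintype V] [DecidableEq V] (D : Finset (Sym2 V)) :
    Finset (Sym2 (Option V)) :=
  D.image (Sym2.map Option.some) ∪
    Finset.univ.image fun u : V => s((Option.some u : Option V), (none : Option V))

/-- The degree of the vertex `w` in the edge set `D`. -/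
def degIn {V : Type*} [Fintype V] [DecidableEq V] (D : Finset (Sym2 V)) (w : V) : ℕ :=
  (D.filter fun e => w ∈ e).card

/-- The set of vertices incident with an edge of `F`. -/
def esupp {V : Type*} [Fintype V] [DecidableEq V] (F : Finset (Sym2 V)) : Finset V :=
  Finset.univ.filter fun w => ∃ e ∈ F, w ∈ e

/-!
A part `A` of the principal partition of `D` is the complement of the support of a hyperplane of
stresses of the form `σ e = 0`, so two edges lie in a common part as soon as the corresponding
coordinates are proportional functionals on the space of stresses of `D`.

Fix `t : V → ℝ` without zeros and realise the cone with apex `0` and the other vertices at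
`(t w)⁻¹ (1, p w)`. Up to rescaling, a stress of the cone is a stress `σ` of `D`, the coefficient of
the cone edge at `w` being the value at `w` of the Laplacian of `σ` applied to `t`. If the cone
edges at `u` and `x` lay in the same part, then the stresses of the generic cone vanishing on both
would have codimension one. As specialising the realisation can only create stresses, the Laplacian
values at `u` and `x` would be proportional functionals of `σ`, for every `t`. Taking indicator
functions for `t` turns this into proportionality of edge coordinates, contradicting (a) and (b).
-/

noncomputable section

section MatrixRank

variable {m n K : Type*} [Finite m] [Fintype n] [Field K]

theorem exists_linearIndependent_row_submatrix (A : Matrix m n K) :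
    ∃ f : Fin A.rank → m, LinearIndependent K (A.submatrix f id).row := by
  rw [A.rank_eq_finrank_span_row]
  obtain ⟨g, hg, -, hind⟩ := Submodule.exists_fun_fin_finrank_span_eq K (Set.range A.row)
  choose f hf using hg
  exact ⟨f, (funext hf : (A.submatrix f id).row = g) ▸ hind⟩

theorem exists_submatrix_det_ne_zero (A : Matrix m n K) :
    ∃ (f : Fin A.rank → m) (g : Fin A.rank → n), (A.submatrix f g).det ≠ 0 := by
  obtain ⟨f, hf⟩ := exists_linearIndependent_row_submatrix A
  have hcols := exists_linearIndependent_row_submatrix (A.submatrix f id).transpose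
  rw [Matrix.rank_transpose, hf.rank_matrix, Fintype.card_fin] at hcols
  obtain ⟨g, hg⟩ := hcols
  refine ⟨f, g, ?_⟩
  rw [← Matrix.det_transpose, ← isUnit_iff_ne_zero, ← Matrix.isUnit_iff_isUnit_det,
    ← Matrix.linearIndependent_rows_iff_isUnit]
  exact hg

/-- A minor that is nonzero after applying `φ` is nonzero in `S`, hence after applying `ψ`. -/
theorem rank_map_le_rank_map_of_injective {S L : Type*} [CommRing S] [Field L]
    (φ : S →+* K) {ψ : S →+* L} (hψ : Function.Injective ψ) (M : Matrix m n S) :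
    (M.map φ).rank ≤ (M.map ψ).rank := by
  obtain ⟨f, g, hdet⟩ := exists_submatrix_det_ne_zero (M.map φ)
  have hφ : ((M.map φ).submatrix f g).det = φ (M.submatrix f g).det :=
    (φ.map_det (M.submatrix f g)).symm
  have hminor : ((M.map ψ).submatrix f g).det ≠ 0 := by
    have hψdet : ((M.map ψ).submatrix f g).det = ψ (M.submatrix f g).det :=
      (ψ.map_det (M.submatrix f g)).symm
    rw [hψdet, map_ne_zero_iff ψ hψ]
    intro hzero
    exact hdet (by rw [hφ, hzero, map_zero])
  calc (M.map φ).rank = ((M.map ψ).submatrix f g).rank := by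
        rw [Matrix.rank_of_det_ne_zero hminor, Fintype.card_fin]
    _ ≤ (M.map ψ).rank := Matrix.rank_submatrix_le _ f g

end MatrixRank

section GenericRank

variable {d : ℕ} {V : Type*} [DecidableEq V]

/-- The rigidity matrix of `K_V` in indeterminate coordinates; a realisation `p` is a point at which
it is evaluated. -/
def polyRigidityMatrix (d : ℕ) (V : Type*) [DecidableEq V] :
    Matrix (Sym2 V) (V × Fin d) (MvPolynomial (V × Fin d) ℚ) := fun e wi =>
  Sym2.lift
    ⟨fun u v => ((if wi.1 = u then 1 else 0) - (if wi.1 = v then 1 else 0)) *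
        (MvPolynomial.X (u, wi.2) - MvPolynomial.X (v, wi.2)),
      fun u v => by ring⟩ e

theorem polyRigidityMatrix_map_aeval (p : V → Fin d → ℝ) :
    (polyRigidityMatrix d V).map
      (MvPolynomial.aeval (R := ℚ) fun wi : V × Fin d => p wi.1 wi.2).toRingHom = rigRow d p := by
  ext e wi
  induction e with
  | _ u v =>
    simp only [polyRigidityMatrix, rigRow, Matrix.map_apply, Sym2.lift_mk,
      AlgHom.toRingHom_eq_coe, RingHom.coe_coe, map_mul, map_sub, MvPolynomial.aeval_X]
    congr 1
    split_ifs <;> simp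

theorem rrk_eq_rank_map [Fintype V] (p : V → Fin d → ℝ) (F : Set (Sym2 V)) :
    rrk d p F = (((polyRigidityMatrix d V).submatrix ((↑) : F → Sym2 V) id).map
      (MvPolynomial.aeval (R := ℚ) fun wi : V × Fin d => p wi.1 wi.2).toRingHom).rank := by
  rw [Matrix.rank_eq_finrank_span_row, ← Matrix.submatrix_map, polyRigidityMatrix_map_aeval,
    rrk, Set.image_eq_range]
  rfl

theorem rrk_le_rrk_of_generic [Fintype V] (p : V → Fin d → ℝ) {q : V → Fin d → ℝ}
    (hq : Generic d q) (F : Set (Sym2 V)) : rrk d p F ≤ rrk d q F := by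
  rw [rrk_eq_rank_map, rrk_eq_rank_map]
  exact rank_map_le_rank_map_of_injective _ hq _

end GenericRank

section Functionals

variable {K W : Type*} [Field K] [AddCommGroup W] [Module K W]

/-- Two functionals are proportional on `S` if their restrictions to `S` are linearly dependent. The
symmetric product form allows either of them to vanish on `S`. -/
def ProportionalOn (S : Submodule K W) (f g : Module.Dual K W) : Prop :=
  ∀ σ ∈ S, ∀ τ ∈ S, f σ * g τ = f τ * g σ

theorem ProportionalOn.symm {S : Submodule K W} {f g : Module.Dual K W}
    (h : ProportionalOn S f g) : ProportionalOn S g f := fun σ hσ τ hτ => by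
  linear_combination -h σ hσ τ hτ

variable [FiniteDimensional K W]

theorem finrank_inf_ker_add_one {S : Submodule K W} {f : Module.Dual K W} {σ : W} (hσ : σ ∈ S)
    (hf : f σ ≠ 0) :
    Module.finrank K (S ⊓ LinearMap.ker f : Submodule K W) + 1 = Module.finrank K S := by
  have hne : f.domRestrict S ≠ 0 := fun h => hf (LinearMap.congr_fun h ⟨σ, hσ⟩)
  rw [← Module.Dual.finrank_ker_add_one_of_ne_zero hne, LinearMap.ker_domRestrict,
    ← Submodule.finrank_map_subtype_eq, Submodule.map_comap_subtype]

theorem proportionalOn_of_finrank_le {S : Submodule K W} {f g : Module.Dual K W}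
    (h : Module.finrank K S ≤
      Module.finrank K (S ⊓ (LinearMap.ker f ⊓ LinearMap.ker g) : Submodule K W) + 1) :
    ProportionalOn S f g := by
  let φ : S →ₗ[K] K × K := (f.prod g).domRestrict S
  have hker : Module.finrank K (LinearMap.ker φ) =
      Module.finrank K (S ⊓ (LinearMap.ker f ⊓ LinearMap.ker g) : Submodule K W) := by
    rw [LinearMap.ker_domRestrict, LinearMap.ker_prod, ← Submodule.finrank_map_subtype_eq,
      Submodule.map_comap_subtype]
  have hrange : Module.finrank K (LinearMap.range φ) ≤ 1 := by
    have := LinearMap.finrank_range_add_finrank_ker φ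
    omega
  obtain ⟨v, hv⟩ := finrank_le_one_iff.1 hrange
  have hmultiple : ∀ σ ∈ S, ∃ c : K, f σ = c * v.1.1 ∧ g σ = c * v.1.2 := fun σ hσ => by
    obtain ⟨c, hc⟩ := hv ⟨φ ⟨σ, hσ⟩, LinearMap.mem_range_self φ _⟩
    have hc' : c • v.1 = (f σ, g σ) := congrArg Subtype.val hc
    exact ⟨c, (congrArg Prod.fst hc').symm, (congrArg Prod.snd hc').symm⟩
  intro σ hσ τ hτ
  obtain ⟨a, hfσ, hgσ⟩ := hmultiple σ hσ
  obtain ⟨b, hfτ, hgτ⟩ := hmultiple τ hτ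
  rw [hfσ, hgσ, hfτ, hgτ]
  ring

end Functionals

section LinearRelations

variable {K ι M : Type*} [Field K] [Fintype ι] [AddCommGroup M] [Module K M]

variable (K) in
/-- The linear relations among the vectors `v i` whose coefficients are supported on `F`. -/
def linearRelations (v : ι → M) (F : Finset ι) : Submodule K (ι → K) :=
  LinearMap.ker (Fintype.linearCombination K v) ⊓
    ⨅ i ∈ (↑F : Set ι)ᶜ, LinearMap.ker (LinearMap.proj i)

variable {v : ι → M} {F : Finset ι}

theorem mem_linearRelations {σ : ι → K} :
    σ ∈ linearRelations K v F ↔ ∑ i, σ i • v i = 0 ∧ ∀ i ∉ F, σ i = 0 := by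
  simp [linearRelations, Fintype.linearCombination_apply]

theorem linearRelations_mono {F' : Finset ι} (h : F ⊆ F') :
    linearRelations K v F ≤ linearRelations K v F' := fun _ hσ =>
  mem_linearRelations.2 ⟨(mem_linearRelations.1 hσ).1,
    fun i hi => (mem_linearRelations.1 hσ).2 i fun hF => hi (h hF)⟩

theorem map_linearCombination_iInf_ker_proj (v : ι → M) (F : Finset ι) :
    (⨅ i ∈ (↑F : Set ι)ᶜ, LinearMap.ker (LinearMap.proj (R := K) (φ := fun _ : ι => K) i)).map
      (Fintype.linearCombination K v) = Submodule.span K (v '' F) := by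
  classical
  rw [← LinearMap.iSup_range_single_eq_iInf_ker_proj K _ isCompl_compl F.finite_toSet,
    ← Set.biUnion_of_singleton (v '' F), Set.biUnion_image, Submodule.span_iUnion₂]
  simp only [Submodule.map_iSup, ← LinearMap.range_comp]
  refine iSup_congr fun i => iSup_congr fun _ => ?_
  rw [← LinearMap.range_toSpanSingleton]
  congr 1
  ext
  simp

theorem finrank_linearRelations_add_finrank_span (v : ι → M) (F : Finset ι) :
    Module.finrank K (linearRelations K v F) + Module.finrank K (Submodule.span K (v '' F)) =
      F.card := by
  classical
  let S : Submodule K (ι → K) := ⨅ i ∈ (↑F : Set ι)ᶜ, LinearMap.ker (LinearMap.proj i)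
  let φ := (Fintype.linearCombination K v).domRestrict S
  have hS : Module.finrank K S = F.card := by
    rw [(LinearMap.iInfKerProjEquiv K (fun _ : ι => K) (I := (↑F : Set ι))
      disjoint_compl_right (by simp)).finrank_eq]
    simp
  have hker : Module.finrank K (LinearMap.ker φ) =
      Module.finrank K (linearRelations K v F) := by
    rw [LinearMap.ker_domRestrict, ← Submodule.finrank_map_subtype_eq,
      Submodule.map_comap_subtype, inf_comm]
    rfl
  rw [← hS, ← hker, ← map_linearCombination_iInf_ker_proj, ← LinearMap.range_domRestrict,
    add_comm]
  exact LinearMap.finrank_range_add_finrank_ker φ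

theorem linearRelations_erase [DecidableEq ι] (i : ι) :
    linearRelations K v (F.erase i) = linearRelations K v F ⊓ LinearMap.ker (LinearMap.proj i) := by
  ext σ
  simp only [mem_linearRelations, Submodule.mem_inf, LinearMap.mem_ker, LinearMap.proj_apply,
    Finset.mem_erase, not_and_or, not_not, or_imp, forall_and, forall_eq]
  tauto

theorem finrank_span_sdiff_singleton_eq_iff {i : ι} (hi : i ∈ F) :
    Module.finrank K (Submodule.span K (v '' (↑F \ {i}))) =
        Module.finrank K (Submodule.span K (v '' F)) ↔
      ∃ σ ∈ linearRelations K v F, σ i ≠ 0 := by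
  classical
  have hF := finrank_linearRelations_add_finrank_span (K := K) v F
  have herase := finrank_linearRelations_add_finrank_span (K := K) v (F.erase i)
  rw [Finset.coe_erase, linearRelations_erase] at herase
  have hcard := Finset.card_erase_add_one hi
  constructor
  · intro hrank
    by_contra! hzero
    have hle : linearRelations K v F ≤ LinearMap.ker (LinearMap.proj i) := hzero
    rw [inf_eq_left.2 hle] at herase
    omega
  · rintro ⟨σ, hσ, hne⟩
    have := finrank_inf_ker_add_one (f := LinearMap.proj i) hσ hne
    omega

variable (K) in
open Classical in
/-- The elements of `F` on which every relation vanishing at `i` vanishes: for `i ∈ F` lying in the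
support of some relation, the series class of `i` in the linear matroid of `v` restricted to `F`. -/
def seriesClass (v : ι → M) (F : Finset ι) (i : ι) : Finset ι :=
  {j ∈ F | ∀ σ ∈ linearRelations K v F, σ i = 0 → σ j = 0}

theorem mem_seriesClass {i j : ι} :
    j ∈ seriesClass K v F i ↔ j ∈ F ∧ ∀ σ ∈ linearRelations K v F, σ i = 0 → σ j = 0 := by
  simp [seriesClass]

theorem self_mem_seriesClass {i : ι} (hi : i ∈ F) : i ∈ seriesClass K v F i :=
  mem_seriesClass.2 ⟨hi, fun _ _ => id⟩

theorem mem_seriesClass_of_proportionalOn {i j : ι} (hj : j ∈ F)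
    (hi : ∃ σ ∈ linearRelations K v F, σ i ≠ 0)
    (h : ProportionalOn (linearRelations K v F) (LinearMap.proj i) (LinearMap.proj j)) :
    j ∈ seriesClass K v F i := by
  obtain ⟨τ, hτ, hne⟩ := hi
  refine mem_seriesClass.2 ⟨hj, fun σ hσ hzero => ?_⟩
  have hprod : τ i * σ j = σ i * τ j := h τ hτ σ hσ
  rw [hzero, zero_mul] at hprod
  exact (mul_eq_zero.1 hprod).resolve_left hne

theorem linearRelations_sdiff_seriesClass [DecidableEq ι] (i : ι) :
    linearRelations K v (F \ seriesClass K v F i) =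
      linearRelations K v F ⊓ LinearMap.ker (LinearMap.proj i) := by
  refine le_antisymm (fun σ hσ => ?_) (fun σ ⟨hσ, hzero⟩ => ?_)
  · have hσF := linearRelations_mono Finset.sdiff_subset hσ
    refine ⟨hσF, (mem_linearRelations.1 hσ).2 i fun hi => ?_⟩
    obtain ⟨hiF, hni⟩ := Finset.mem_sdiff.1 hi
    exact hni (self_mem_seriesClass hiF)
  · refine mem_linearRelations.2 ⟨(mem_linearRelations.1 hσ).1, fun j hj => ?_⟩
    by_cases hjF : j ∈ F
    · have hclass : j ∈ seriesClass K v F i := by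
        by_contra hnot
        exact hj (Finset.mem_sdiff.2 ⟨hjF, hnot⟩)
      exact (mem_seriesClass.1 hclass).2 σ hσ hzero
    · exact (mem_linearRelations.1 hσ).2 j hjF

end LinearRelations

section Laplacian

variable {K V : Type*} [Field K]

/-- The function on the cone that vanishes at the apex and equals `g / t` on the base. -/
def coneExtend (t g : V → K) (o : Option V) : K :=
  o.elim 0 fun w => (t w)⁻¹ * g w

/-- Transfer of edge weights from the cone to the base, inverse to
`σ s(a, b) ↦ t a * t b * σ s(a, b)` on base edges. -/
def decone (t : V → K) : (Sym2 (Option V) → K) →ₗ[K] (Sym2 V → K) :=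
  LinearMap.pi fun e => (e.map t).mul⁻¹ • LinearMap.proj (e.map some)

theorem decone_mk (t : V → K) (ω : Sym2 (Option V) → K) (a b : V) :
    decone t ω s(a, b) = (t a * t b)⁻¹ * ω s(some a, some b) := rfl

variable [Fintype V]

/-- The value at `w` of the Laplacian with edge weights `σ` applied to `t`, as a functional
of `σ`. -/
def laplacianAt (t : V → K) (w : V) : Module.Dual K (Sym2 V → K) :=
  ∑ y, (t w - t y) • LinearMap.proj s(w, y)

theorem laplacianAt_apply (t : V → K) (w : V) (σ : Sym2 V → K) :
    laplacianAt t w σ = ∑ y, (t w - t y) * σ s(w, y) := by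
  simp [laplacianAt]

theorem laplacianAt_add (s t : V → K) (w : V) :
    laplacianAt (s + t) w = laplacianAt s w + laplacianAt t w := by
  simp only [laplacianAt, ← Finset.sum_add_distrib, ← add_smul, Pi.add_apply, add_sub_add_comm]

theorem laplacianAt_const (c : K) (w : V) : laplacianAt (fun _ => c) w = 0 := by
  simp [laplacianAt]

theorem laplacianAt_single [DecidableEq V] {w y : V} (h : w ≠ y) :
    laplacianAt (Pi.single y (1 : K)) w = -LinearMap.proj s(w, y) := by
  refine LinearMap.ext fun σ => ?_
  rw [laplacianAt_apply, Fintype.sum_eq_single y fun b hb => by simp [h, hb]]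
  simp [h]

theorem laplacianAt_coneExtend {t : V → K} (ht : ∀ w, t w ≠ 0) (g : V → K) (w : V)
    (ω : Sym2 (Option V) → K) :
    laplacianAt (coneExtend t g) (some w) ω =
      g w * ((t w)⁻¹ * ω s(some w, none) - laplacianAt t w (decone t ω)) +
        t w * laplacianAt g w (decone t ω) := by
  have hterm : ∀ y, ((t w)⁻¹ * g w - (t y)⁻¹ * g y) * ω s(some w, some y) =
      t w * ((g w - g y) * decone t ω s(w, y)) - g w * ((t w - t y) * decone t ω s(w, y)) := by
    intro y
    have := ht w
    have := ht y
    rw [decone_mk]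
    field_simp
    ring
  simp only [laplacianAt_apply, Fintype.sum_option, coneExtend, Option.elim_some,
    Option.elim_none, hterm, Finset.sum_sub_distrib, ← Finset.mul_sum]
  ring

variable {S : Submodule K (Sym2 V → K)} {u x : V}

theorem proportionalOn_proj_of_laplacianAt
    (h : ∀ t : V → K, ProportionalOn S (laplacianAt t u) (laplacianAt t x)) {z : V}
    (huz : u ≠ z) (hxz : x ≠ z) :
    ProportionalOn S (LinearMap.proj s(u, z)) (LinearMap.proj s(x, z)) := by
  classical
  simpa only [ProportionalOn, laplacianAt_single huz, laplacianAt_single hxz,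
    LinearMap.neg_apply, neg_mul_neg] using h (Pi.single z 1)

/-- Compare the indicator functions of `{y}` and of `{y, w}`. -/
theorem proportionalOn_proj_of_laplacianAt_of_eq_zero
    (h : ∀ t : V → K, ProportionalOn S (laplacianAt t u) (laplacianAt t x)) {w y : V}
    (huw : u ≠ w) (hxw : x ≠ w) (hxy : x ≠ y) (hzero : ∀ σ ∈ S, σ s(x, w) = 0) :
    ProportionalOn S (LinearMap.proj s(u, w)) (LinearMap.proj s(x, y)) := by
  classical
  intro σ hσ τ hτ
  have hy := h (Pi.single y 1) σ hσ τ hτ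
  have hyw := h (Pi.single y 1 + Pi.single w 1) σ hσ τ hτ
  simp only [laplacianAt_add, laplacianAt_single huw, laplacianAt_single hxw,
    laplacianAt_single hxy, LinearMap.add_apply, LinearMap.neg_apply, LinearMap.proj_apply,
    hzero σ hσ, hzero τ hτ] at hy hyw
  simp only [LinearMap.proj_apply]
  linear_combination hyw - hy

end Laplacian

section Stress

variable {d k : ℕ} {V : Type*} [Fintype V] [DecidableEq V] {p : V → Fin d → ℝ}
  {D : Finset (Sym2 V)}

/-- The space of equilibrium stresses of the framework `(D, p)`. -/
abbrev stressSpace (d : ℕ) (p : V → Fin d → ℝ) (D : Finset (Sym2 V)) :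
    Submodule ℝ (Sym2 V → ℝ) :=
  linearRelations ℝ (rigRow d p) D

theorem finrank_stressSpace_add_rrk (p : V → Fin d → ℝ) (D : Finset (Sym2 V)) :
    Module.finrank ℝ (stressSpace d p D) + rrk d p D = D.card :=
  finrank_linearRelations_add_finrank_span _ _

theorem isKFoldCircuit_iff :
    IsKFoldCircuit d p D k ↔
      (∀ e ∈ D, ∃ σ ∈ stressSpace d p D, σ e ≠ 0) ∧
        Module.finrank ℝ (stressSpace d p D) = k := by
  have hrank := finrank_stressSpace_add_rrk p D
  refine and_congr (forall₂_congr fun _ he => finrank_span_sdiff_singleton_eq_iff he) ?_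
  omega

theorem isPrincipalPart_seriesClass (hD : IsKFoldCircuit d p D k) {e : Sym2 V} (he : e ∈ D) :
    IsPrincipalPart d p D k (seriesClass ℝ (rigRow d p) D e) := by
  obtain ⟨hsupp, hdim⟩ := isKFoldCircuit_iff.1 hD
  obtain ⟨τ, hτ, hne⟩ := hsupp e he
  have hclass : seriesClass ℝ (rigRow d p) D e ⊆ D := fun _ h => (mem_seriesClass.1 h).1
  have hsub : stressSpace d p (D \ seriesClass ℝ (rigRow d p) D e) =
      stressSpace d p D ⊓ LinearMap.ker (LinearMap.proj e) := linearRelations_sdiff_seriesClass e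
  refine ⟨D \ seriesClass ℝ (rigRow d p) D e, Finset.sdiff_subset, isKFoldCircuit_iff.2 ⟨?_, ?_⟩,
    (Finset.sdiff_sdiff_eq_self hclass).symm⟩
  · intro f hf
    obtain ⟨hfD, hfclass⟩ := Finset.mem_sdiff.1 hf
    rw [mem_seriesClass] at hfclass
    push Not at hfclass
    obtain ⟨σ, hσ, hσe, hσf⟩ := hfclass hfD
    exact ⟨σ, hsub.ge ⟨hσ, hσe⟩, hσf⟩
  · have hcodim := finrank_inf_ker_add_one (f := LinearMap.proj e) hτ hne
    rw [hsub]
    omega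

theorem exists_isPrincipalPart_of_proportionalOn (hD : IsKFoldCircuit d p D k) {e : Sym2 V}
    (he : e ∈ D) :
    ∃ A, IsPrincipalPart d p D k A ∧ e ∈ A ∧ ∀ f ∈ D,
      ProportionalOn (stressSpace d p D) (LinearMap.proj e) (LinearMap.proj f) → f ∈ A :=
  ⟨_, isPrincipalPart_seriesClass hD he, self_mem_seriesClass he,
    fun _ hf => mem_seriesClass_of_proportionalOn hf ((isKFoldCircuit_iff.1 hD).1 e he)⟩

theorem sum_smul_rigRow_apply (σ : Sym2 V → ℝ) (w : V) (i : Fin d) :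
    (∑ e, σ e • rigRow d p e) (w, i) = laplacianAt (fun y => p y i) w σ := by
  rw [Finset.sum_apply, laplacianAt_apply]
  refine (Fintype.sum_of_injective (fun y => s(w, y)) (fun _ _ => Sym2.congr_right.1) _ _
    (fun e he => ?_) fun y => ?_).symm
  · induction e with
    | _ a b =>
      have ha : w ≠ a := by rintro rfl; exact he ⟨b, rfl⟩
      have hb : w ≠ b := by rintro rfl; exact he ⟨a, Sym2.eq_swap⟩
      simp [rigRow, ha, hb]
  · rcases eq_or_ne w y with rfl | hwy
    · simp [rigRow]
    · simp [rigRow, hwy, mul_comm]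

theorem mem_stressSpace_iff_laplacianAt {σ : Sym2 V → ℝ} :
    σ ∈ stressSpace d p D ↔
      (∀ w i, laplacianAt (fun y => p y i) w σ = 0) ∧ ∀ e ∉ D, σ e = 0 := by
  rw [mem_linearRelations, funext_iff, Prod.forall]
  simp only [sum_smul_rigRow_apply, Pi.zero_apply]

theorem subset_of_laplacianAt_of_not_monochromatic (hD : IsKFoldCircuit d p D k)
    (hsimple : ∀ e ∈ D, ¬ e.IsDiag) {u x : V} (hx : ¬ Monochromatic d p D k x)
    (h : ∀ t : V → ℝ, ProportionalOn (stressSpace d p D) (laplacianAt t u) (laplacianAt t x)) :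
    {w : V | s(u, w) ∈ D} \ {x} ⊆ {w : V | s(x, w) ∈ D} \ {u} := by
  rintro w ⟨huw : s(u, w) ∈ D, hwx : w ≠ x⟩
  have hu_ne : u ≠ w := hsimple _ huw
  refine ⟨?_, hu_ne.symm⟩
  by_contra hxw
  obtain ⟨A, hA, -, hall⟩ := exists_isPrincipalPart_of_proportionalOn hD huw
  refine hx ⟨A, hA, fun e he hxe => hall e he ?_⟩
  obtain ⟨y, rfl⟩ := Sym2.mem_iff_exists.1 hxe
  exact proportionalOn_proj_of_laplacianAt_of_eq_zero h hu_ne hwx.symm (hsimple _ he)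
    fun σ hσ => (mem_linearRelations.1 hσ).2 _ hxw

end Stress

section Cone

theorem exists_forall_add_const_ne_zero {V : Type*} [Finite V] (t : V → ℝ) :
    ∃ c : ℝ, ∀ w, t w + c ≠ 0 := by
  obtain ⟨c, hc⟩ := (Set.finite_range fun w => -t w).exists_notMem
  exact ⟨c, fun w hw => hc ⟨w, by dsimp only; linarith⟩⟩

variable {d k : ℕ} {V : Type*} [Fintype V] [DecidableEq V] {p : V → Fin d → ℝ}
  {t : V → ℝ} {D : Finset (Sym2 V)} {C : Finset (Sym2 (Option V))} {ω : Sym2 (Option V) → ℝ}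

theorem map_some_mem_coneEdges {e : Sym2 V} : e.map some ∈ coneEdges D ↔ e ∈ D := by
  rw [coneEdges, Finset.mem_union, (Sym2.map.injective (Option.some_injective V)).mem_finset_image,
    or_iff_left]
  induction e with
  | _ a b => simp

theorem apex_loop_notMem_coneEdges : s((none : Option V), none) ∉ coneEdges D := by
  simp [coneEdges, Sym2.forall]

/-- The realisation of the cone with apex `0` and `w` at `(t w)⁻¹ (1, p w)`. -/
def coneRealisation (p : V → Fin d → ℝ) (t : V → ℝ) : Option V → Fin (d + 1) → ℝ := fun o i =>
  coneExtend t (fun w => (Fin.cons 1 (p w) : Fin (d + 1) → ℝ) i) o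

theorem laplacianAt_decone (ht : ∀ w, t w ≠ 0)
    (hω : ω ∈ stressSpace (d + 1) (coneRealisation p t) C) (w : V) :
    laplacianAt t w (decone t ω) = (t w)⁻¹ * ω s(some w, none) := by
  have hfirst : laplacianAt (coneExtend t fun _ => 1) (some w) ω = 0 :=
    (mem_stressSpace_iff_laplacianAt.1 hω).1 (some w) 0
  rw [laplacianAt_coneExtend ht, laplacianAt_const] at hfirst
  simp only [LinearMap.zero_apply] at hfirst
  linear_combination -hfirst

theorem decone_mem_stressSpace (ht : ∀ w, t w ≠ 0) (hC : C ⊆ coneEdges D)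
    (hω : ω ∈ stressSpace (d + 1) (coneRealisation p t) C) :
    decone t ω ∈ stressSpace d p D := by
  obtain ⟨hequil, hsupp⟩ := mem_stressSpace_iff_laplacianAt.1 hω
  refine mem_stressSpace_iff_laplacianAt.2 ⟨fun w i => ?_, fun e he => ?_⟩
  · have hsucc : laplacianAt (coneExtend t fun y => p y i) (some w) ω = 0 :=
      hequil (some w) i.succ
    rw [laplacianAt_coneExtend ht, laplacianAt_decone ht hω, sub_self, mul_zero, zero_add] at hsucc
    exact (mul_eq_zero.1 hsucc).resolve_left (ht w)
  · have hzero : ω (e.map some) = 0 :=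
      hsupp _ fun heC => he (map_some_mem_coneEdges.1 (hC heC))
    simp [decone, hzero]

theorem disjoint_stressSpace_ker_decone (ht : ∀ w, t w ≠ 0) (hC : C ⊆ coneEdges D) :
    Disjoint (stressSpace (d + 1) (coneRealisation p t) C) (LinearMap.ker (decone t)) := by
  rw [Submodule.disjoint_def]
  intro ω hω hker
  have hbase : ∀ a b : V, ω s(some a, some b) = 0 := fun a b => by
    have hab := congrFun hker s(a, b)
    rw [decone_mk] at hab
    simpa [ht] using hab
  have hspoke : ∀ a : V, ω s(some a, none) = 0 := fun a => by
    have ha := laplacianAt_decone ht hω a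
    rw [LinearMap.mem_ker.1 hker, map_zero] at ha
    simpa [ht] using ha.symm
  ext e
  induction e with
  | _ a b =>
    rcases a with _ | a <;> rcases b with _ | b
    · exact (mem_linearRelations.1 hω).2 _ fun h => apex_loop_notMem_coneEdges (hC h)
    · rw [Sym2.eq_swap]
      exact hspoke b
    · exact hspoke a
    · exact hbase a b

theorem finrank_stressSpace_coneRealisation_le (ht : ∀ w, t w ≠ 0) (hC : C ⊆ coneEdges D)
    {u x : V} (hu : s(some u, none) ∉ C) (hx : s(some x, none) ∉ C) :
    Module.finrank ℝ (stressSpace (d + 1) (coneRealisation p t) C) ≤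
      Module.finrank ℝ (stressSpace d p D ⊓
        (LinearMap.ker (laplacianAt t u) ⊓ LinearMap.ker (laplacianAt t x)) :
          Submodule ℝ (Sym2 V → ℝ)) := by
  have hvanish : ∀ ω ∈ stressSpace (d + 1) (coneRealisation p t) C, ∀ w, s(some w, none) ∉ C →
      laplacianAt t w (decone t ω) = 0 := fun ω hω w hw => by
    rw [laplacianAt_decone ht hω, (mem_linearRelations.1 hω).2 _ hw, mul_zero]
  have hmaps : ∀ ω ∈ stressSpace (d + 1) (coneRealisation p t) C, decone t ω ∈ stressSpace d p D ⊓
      (LinearMap.ker (laplacianAt t u) ⊓ LinearMap.ker (laplacianAt t x)) := fun ω hω =>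
    ⟨decone_mem_stressSpace ht hC hω, hvanish ω hω u hu, hvanish ω hω x hx⟩
  exact LinearMap.finrank_le_finrank_of_injective
    ((LinearMap.injective_restrict_iff hmaps).2 (disjoint_stressSpace_ker_decone ht hC))

theorem finrank_stressSpace_le_of_generic {q : V → Fin d → ℝ} (hq : Generic d q)
    (p : V → Fin d → ℝ) (D : Finset (Sym2 V)) :
    Module.finrank ℝ (stressSpace d q D) ≤ Module.finrank ℝ (stressSpace d p D) := by
  have := finrank_stressSpace_add_rrk p D
  have := finrank_stressSpace_add_rrk q D
  have := rrk_le_rrk_of_generic p hq D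
  omega

theorem proportionalOn_laplacianAt_of_isPrincipalPart (hD : IsKFoldCircuit d p D k)
    {q : Option V → Fin (d + 1) → ℝ} (hq : Generic (d + 1) q) {A : Finset (Sym2 (Option V))}
    (hA : IsPrincipalPart (d + 1) q (coneEdges D) k A) {u x : V}
    (hu : s(some u, none) ∈ A) (hx : s(some x, none) ∈ A) (t : V → ℝ) :
    ProportionalOn (stressSpace d p D) (laplacianAt t u) (laplacianAt t x) := by
  obtain ⟨C, hC, hCcircuit, rfl⟩ := hA
  obtain ⟨c, hc⟩ := exists_forall_add_const_ne_zero t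
  have hshift : ∀ w, laplacianAt t w = laplacianAt (t + fun _ => c) w := fun w => by
    rw [laplacianAt_add, laplacianAt_const, add_zero]
  rw [hshift u, hshift x]
  apply proportionalOn_of_finrank_le
  have hdim := (isKFoldCircuit_iff.1 hD).2
  have hgeneric := (isKFoldCircuit_iff.1 hCcircuit).2
  have hspecial := finrank_stressSpace_le_of_generic hq (coneRealisation p (t + fun _ => c)) C
  have hbase := finrank_stressSpace_coneRealisation_le (p := p) (t := t + fun _ => c) hc hC
    (Finset.mem_sdiff.1 hu).2 (Finset.mem_sdiff.1 hx).2
  omega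

end Cone

end

theorem cone_technicolour_different_parts_general
    {d k : ℕ} {V : Type*} [Fintype V] [DecidableEq V]
    {D : Finset (Sym2 V)} (hsimple : ∀ e ∈ D, ¬ e.IsDiag)
    {p : V → Fin d → ℝ} {q : Option V → Fin (d + 1) → ℝ} (hq : Generic (d + 1) q)
    (hD : IsKFoldCircuit d p D k) {u x : V}
    (htu : ¬ Monochromatic d p D k u) (htx : ¬ Monochromatic d p D k x)
    (hcase :
      (∃ z : V, s(u, z) ∈ D ∧ s(x, z) ∈ D ∧
        ¬ ∃ A, IsPrincipalPart d p D k A ∧ s(u, z) ∈ A ∧ s(x, z) ∈ A) ∨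
      {w : V | s(u, w) ∈ D} \ {x} ≠ {w : V | s(x, w) ∈ D} \ {u}) :
    ¬ ∃ A', IsPrincipalPart (d + 1) q (coneEdges D) k A' ∧
      s(some u, none) ∈ A' ∧ s(some x, none) ∈ A' := by
  rintro ⟨A', hA', huA', hxA'⟩
  have hprop := proportionalOn_laplacianAt_of_isPrincipalPart hD hq hA' huA' hxA'
  rcases hcase with ⟨z, huz, hxz, hparts⟩ | hne
  · obtain ⟨A, hA, huA, hall⟩ := exists_isPrincipalPart_of_proportionalOn hD huz
    exact hparts ⟨A, hA, huA, hall _ hxz <|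
      proportionalOn_proj_of_laplacianAt hprop (hsimple _ huz) (hsimple _ hxz)⟩
  · exact hne <| Set.Subset.antisymm
      (subset_of_laplacianAt_of_not_monochromatic hD hsimple htx hprop)
      (subset_of_laplacianAt_of_not_monochromatic hD hsimple htu fun t => (hprop t).symm)

/-- Theorem 4.3: cone edges at two technicolour vertices lie in different parts of
the principal partition of the cone, under condition (a) or (b). -/
theorem cone_technicolour_different_parts
    (d k : ℕ) (hd : 1 ≤ d) (hk : 1 ≤ k)
    {V : Type*} [Fintype V] [DecidableEq V]
    (D : Finset (Sym2 V)) (hsimple : ∀ e ∈ D, ¬ e.IsDiag)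
    (hcov : ∀ w : V, ∃ e ∈ D, w ∈ e)
    (p : V → Fin d → ℝ) (hp : Generic d p)
    (q : Option V → Fin (d+1) → ℝ) (hq : Generic (d+1) q)
    (hD : IsKFoldCircuit d p D k)
    (u x : V) (hux : u ≠ x)
    (htu : ¬ Monochromatic d p D k u) (htx : ¬ Monochromatic d p D k x)
    (hcase :
      (∃ z : V, s(u, z) ∈ D ∧ s(x, z) ∈ D ∧
        ¬ ∃ A : Finset (Sym2 V), IsPrincipalPart d p D k A ∧
          s(u, z) ∈ A ∧ s(x, z) ∈ A) ∨
      ({w : V | s(u, w) ∈ D} \ {x} ≠ {w : V | s(x, w) ∈ D} \ {u})) :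
    ¬ ∃ A' : Finset (Sym2 (Option V)),
        IsPrincipalPart (d+1) q (coneEdges D) k A' ∧
        s((Option.some u : Option V), (none : Option V)) ∈ A' ∧
        s((Option.some x : Option V), (none : Option V)) ∈ A' :=
  cone_technicolour_different_parts_general hsimple hq hD htu htx hcase
end

section
/- Let d ≥ 3 and k ≥ 2, and let G = (V,E) be a graph with no isolated vertices whose edge set E is a k-fold R_d-circuit, such that G is not R_d-rigid and |V| ≤ d+5. Then k = 2 and G is the union of two complete graphs G_1 and G_2, each on d+2 vertices, with |V(G_1) ∩ V(G_2)| = d−1 (the graph denoted B̄_{d,d−1}). -/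
open scoped BigOperators

/-- The edge set of the complete graph on the vertex set `W`. -/
def cliqueOn {V : Type*} [Fintype V] [DecidableEq V] (W : Finset V) : Finset (Sym2 V) :=
  ((W ×ˢ W).filter fun t => t.1 ≠ t.2).image fun t => s(t.1, t.2)

/-!
Evaluating a linear form on the symmetric products `b u * b v` of a Gale dual configuration `b` in
`ℝ ^ m` gives a stress of the complete framework on `d + 1 + m` points in `ℝ ^ d`. Hence a set of
edges is coindependent in the rigidity matroid as soon as its symmetric products are linearly
independent for one (equivalently, every generic) configuration in `ℝ ^ m`.

All vertices of a `k`-fold circuit have degree at least `d + 1`, so the complement of a circuit on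
`d + 1 + m ≤ d + 5` vertices has maximum degree at most `m - 1 ≤ 3`. Graphs with this degree bound
and fewer than `(m + 1).choose 2` edges have independent symmetric products, with the single
exception of `K_{3,3}` for `m = 4`. If the circuit is flexible, then a minimal set of missing edges
that is not coindependent is small, since each coindependent set `J` of missing edges satisfies
`|J| + k ≤ (m + 1).choose 2`; so it is `K_{3,3}`, and the same inequality gives `k = 2`. Any further
missing edge could be exchanged for an edge of `K_{3,3}` to give a coindependent set with nine
elements, contradicting that inequality once more.
-/

/-! ### Generic points -/

section GenericPoints

theorem linearIndependent_row_iff_det_mul_transpose_ne_zero {K ι κ : Type*} [Field K]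
    [LinearOrder K] [IsStrictOrderedRing K] [Fintype ι] [DecidableEq ι] [Fintype κ]
    (A : Matrix ι κ K) : LinearIndependent K A.row ↔ (A * A.transpose).det ≠ 0 := by
  rw [← isUnit_iff_ne_zero, ← Matrix.isUnit_iff_isUnit_det,
    ← Matrix.linearIndependent_rows_iff_isUnit, linearIndependent_iff_card_eq_finrank_span,
    linearIndependent_iff_card_eq_finrank_span, Set.finrank, Set.finrank,
    ← Matrix.rank_eq_finrank_span_row, ← Matrix.rank_eq_finrank_span_row,
    Matrix.rank_self_mul_transpose]

theorem linearIndepOn_of_algebraicIndependent {R K σ ι κ : Type*} [CommRing R] [Field K]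
    [LinearOrder K] [IsStrictOrderedRing K] [Algebra R K] [Finite κ] {f : (σ → K) → ι → κ → K}
    (hf : ∀ i k, ∃ P : MvPolynomial σ R, ∀ x, f x i k = MvPolynomial.aeval x P)
    {x x₀ : σ → K} (hx : AlgebraicIndependent R x) {s : Finset ι}
    (h : LinearIndepOn K (f x₀) (s : Set ι)) : LinearIndepOn K (f x) (s : Set ι) := by
  classical
  have := Fintype.ofFinite κ
  choose P hP using hf
  let M : Matrix s κ (MvPolynomial σ R) := Matrix.of fun i k => P i k
  let A (y : σ → K) : Matrix s κ K := Matrix.of fun i k => f y i k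
  have hdet (y : σ → K) :
      (A y * (A y).transpose).det = MvPolynomial.aeval y (M * M.transpose).det := by
    rw [AlgHom.map_det]
    congr 1
    ext i j
    simp [A, M, Matrix.mul_apply, hP]
  change LinearIndependent K (A x₀).row at h
  change LinearIndependent K (A x).row
  rw [linearIndependent_row_iff_det_mul_transpose_ne_zero, hdet] at h ⊢
  refine (map_ne_zero_iff _ hx).2 fun h0 => h ?_
  rw [h0, map_zero]

theorem Generic.linearIndepOn {V ι κ : Type*} [Finite κ] {d : ℕ}
    {f : (V → Fin d → ℝ) → ι → κ → ℝ}
    (hf : ∀ i k, ∃ P : MvPolynomial (V × Fin d) ℚ, ∀ p,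
      f p i k = MvPolynomial.aeval (fun vi : V × Fin d => p vi.1 vi.2) P)
    {p : V → Fin d → ℝ} (hp : Generic d p) {p₀ : V → Fin d → ℝ} {s : Finset ι}
    (h : LinearIndepOn ℝ (f p₀) (s : Set ι)) : LinearIndepOn ℝ (f p) (s : Set ι) :=
  linearIndepOn_of_algebraicIndependent (R := ℚ) (f := fun x => f (Function.curry x))
    (x₀ := fun vi => p₀ vi.1 vi.2) (fun i k => (hf i k).imp fun _ hP _ => hP _) hp h

theorem exists_generic (d : ℕ) (V : Type*) [Finite V] : ∃ p : V → Fin d → ℝ, Generic d p := by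
  obtain ⟨s, hs⟩ := exists_isTranscendenceBasis ℚ ℝ
  have : Infinite s := by
    by_contra hfin
    have : Finite s := not_infinite_iff_finite.1 hfin
    have : Countable (Algebra.adjoin ℚ (Set.range ((↑) : s → ℝ))) :=
      have : Countable (MvPolynomial s ℚ) := Cardinal.mk_le_aleph0_iff.1 <|
        MvPolynomial.cardinalMk_le_max.trans (by simp [Cardinal.mk_le_aleph0])
      hs.1.aevalEquiv.symm.injective.countable
    have := hs.isAlgebraic
    have hle := Algebra.IsAlgebraic.cardinalMk_le_max (Algebra.adjoin ℚ (Set.range ((↑) : s → ℝ))) ℝ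
    rw [max_eq_right Cardinal.mk_le_aleph0, Cardinal.mk_real] at hle
    exact hle.not_gt Cardinal.aleph0_lt_continuum
  let g : V × Fin d ↪ s :=
    (Finite.equivFin _).toEmbedding.trans (Fin.valEmbedding.trans (Infinite.natEmbedding s))
  exact ⟨fun v i => g (v, i), hs.1.comp g g.injective⟩

end GenericPoints

/-! ### Uniform configurations -/

section Uniform

/-- A configuration of vectors in `K ^ m` is uniform if any `m` of them are linearly independent,
that is, if it represents the uniform matroid of rank `m`. -/
def IsUniform {K V : Type*} [Field K] {m : ℕ} (b : V → Fin m → K) : Prop :=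
  ∀ S : Finset V, S.card ≤ m → LinearIndepOn K b (S : Set V)

theorem linearIndepOn_pow {K V : Type*} [Field K] {m : ℕ} {t : V → K} {S : Finset V}
    (ht : Set.InjOn t S) (hS : S.card ≤ m) :
    LinearIndepOn K (fun v (i : Fin m) => t v ^ (i : ℕ)) (S : Set V) := by
  have hdet : (Matrix.vandermonde fun i => t (S.equivFin.symm i)).det ≠ 0 :=
    Matrix.det_vandermonde_ne_zero_iff.2 fun i j hij =>
      S.equivFin.symm.injective <| Subtype.ext <| ht (Subtype.prop _) (Subtype.prop _) hij
  have hli := (Matrix.linearIndependent_rows_of_det_ne_zero hdet).comp _ S.equivFin.injective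
  refine LinearIndependent.of_comp (LinearMap.funLeft K K (Fin.castLE hS)) ?_
  have heq (v : S) : LinearMap.funLeft K K (Fin.castLE hS) (fun i => t v ^ (i : ℕ)) =
      Matrix.vandermonde (fun i => t (S.equivFin.symm i)) (S.equivFin v) := by
    ext i
    simp [LinearMap.funLeft_apply, Matrix.vandermonde_apply]
  exact (funext heq : LinearMap.funLeft K K (Fin.castLE hS) ∘ _ = _) ▸ hli

/-- The points of the affine space `K ^ d` in homogeneous coordinates. Linear independence of
`homogenize p` is affine independence of `p`, and `IsUniform (homogenize p)` says that `p` is in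
general position. -/
def homogenize {K V : Type*} [One K] {d : ℕ} (p : V → Fin d → K) (v : V) : Fin (d + 1) → K :=
  Fin.cons 1 (p v)

theorem exists_injOn_real {V : Type*} (S : Finset V) : ∃ t : V → ℝ, Set.InjOn t S :=
  have ⟨t, _, ht⟩ := S.finite_toSet.exists_injOn_of_encard_le (t := (Set.univ : Set ℝ)) (by simp)
  ⟨t, ht⟩

theorem Generic.isUniform {V : Type*} {m : ℕ} {b : V → Fin m → ℝ} (hb : Generic m b) :
    IsUniform b := fun S hS =>
  have ⟨_, ht⟩ := exists_injOn_real S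
  hb.linearIndepOn (f := id) (fun v i => ⟨.X (v, i), by simp⟩) (linearIndepOn_pow ht hS)

theorem Generic.isUniform_homogenize {V : Type*} {d : ℕ} {p : V → Fin d → ℝ} (hp : Generic d p) :
    IsUniform (homogenize p) := fun S hS => by
  obtain ⟨t, ht⟩ := exists_injOn_real S
  refine hp.linearIndepOn (f := homogenize) (p₀ := fun v i => t v ^ ((i : ℕ) + 1))
    (fun v i => ?_) ?_
  · exact Fin.cases ⟨1, by simp [homogenize]⟩ (fun i => ⟨.X (v, i), by simp [homogenize]⟩) i
  · have heq : homogenize (fun v (i : Fin d) => t v ^ ((i : ℕ) + 1)) =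
        fun v (i : Fin (d + 1)) => t v ^ (i : ℕ) := by
      ext v i
      refine Fin.cases ?_ (fun i => ?_) i <;> simp [homogenize]
    exact heq ▸ linearIndepOn_pow ht hS

variable {K V : Type*} [Field K] {d m r : ℕ}

theorem IsUniform.exists_relation_ne_zero {b : V → Fin m → K} (hb : IsUniform b) {W : Finset V}
    (hW : m < W.card) {v : V} (hv : v ∈ W) :
    ∃ c : V → K, ∑ u ∈ W, c u • b u = 0 ∧ c v ≠ 0 := by
  classical
  obtain ⟨S, hSW, hS⟩ := Finset.exists_subset_card_eq
    (show m ≤ (W.erase v).card by rw [Finset.card_erase_of_mem hv]; lia)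
  have hvS : v ∉ S := fun h => by simpa using hSW h
  by_contra! hzero
  suffices LinearIndepOn K b (insert v S : Finset V) by
    simpa [hvS, hS] using LinearIndependent.fintype_card_le_finrank this
  refine linearIndepOn_finset_iff.2 fun f hf => ?_
  have hfv : f v = 0 := by
    have hSW' : insert v S ⊆ W :=
      Finset.insert_subset hv (hSW.trans (Finset.erase_subset v W))
    simpa using hzero (fun u => if u ∈ insert v S then f u else 0) (by
      simpa only [ite_smul, zero_smul, Finset.sum_ite_mem, Finset.inter_eq_right.2 hSW'] using hf)
  rw [Finset.sum_insert hvS, hfv, zero_smul, zero_add] at hf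
  exact Finset.forall_mem_insert .. |>.2 ⟨hfv, linearIndepOn_finset_iff.1 (hb S hS.le) f hf⟩

theorem IsUniform.exists_relation [Infinite K] {b : V → Fin m → K} (hb : IsUniform b)
    {W : Finset V} (hW : m < W.card) :
    ∃ c : V → K, (∀ v, c v ≠ 0 ↔ v ∈ W) ∧ ∑ v ∈ W, c v • b v = 0 := by
  classical
  let T : (V → K) →ₗ[K] (Fin m → K) := ∑ v ∈ W, (LinearMap.proj v).smulRight (b v)
  obtain ⟨c, hc, hcW⟩ := Module.Dual.exists_forall_mem_ne_zero_of_forall_exists (LinearMap.ker T)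
    (fun v : W => LinearMap.proj (v : V)) fun v =>
      have ⟨c, hc, hcv⟩ := hb.exists_relation_ne_zero hW v.2
      ⟨c, by simpa [T] using hc, hcv⟩
  refine ⟨fun v => if v ∈ W then c v else 0, fun v => ?_, ?_⟩
  · by_cases hv : v ∈ W
    · simpa [hv] using hcW ⟨v, hv⟩
    · simp [hv]
  · rw [← show T c = 0 from hc]
    simp +contextual [T]

theorem IsUniform.of_relations [Fintype V] {b : V → Fin m → K} (hb : IsUniform b)
    (hcard : Fintype.card V = r + m) {y : V → Fin r → K}
    (hy : LinearIndependent K fun i v => y v i) (hrel : ∀ i, ∑ v, y v i • b v = 0) :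
    IsUniform y := by
  classical
  intro S hS
  obtain ⟨S', hSS', -, hS'⟩ := Finset.exists_subsuperset_card_eq (Finset.subset_univ S) hS
    (by rw [Finset.card_univ]; lia)
  refine LinearIndepOn.mono ?_ (Finset.coe_subset.2 hSS')
  let e : S' ≃ Fin r := S'.equivFinOfCardEq hS'
  let A : Matrix (Fin r) (Fin r) K := Matrix.of fun i j => y (e.symm i) j
  suffices LinearIndependent K A.row from (linearIndependent_equiv e.symm).1 this
  rw [Matrix.linearIndependent_rows_iff_isUnit, ← Matrix.linearIndependent_cols_iff_isUnit,
    Fintype.linearIndependent_iff]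
  intro g hg
  have hz (v : V) (hv : v ∈ S') : ∑ i, g i * y v i = 0 := by
    simpa [A] using congrFun hg (e ⟨v, hv⟩)
  have hrelz : ∑ v ∈ S'ᶜ, (∑ i, g i * y v i) • b v = 0 := by
    have htot : ∑ v, (∑ i, g i * y v i) • b v = 0 := by
      simp only [Finset.sum_smul, mul_smul]
      rw [Finset.sum_comm]
      simp [← Finset.smul_sum, hrel]
    have hin : ∑ v ∈ S', (∑ i, g i * y v i) • b v = 0 :=
      Finset.sum_eq_zero fun v hv => by rw [hz v hv, zero_smul]
    rwa [← Finset.sum_compl_add_sum S', hin, add_zero] at htot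
  have hzc := linearIndepOn_finset_iff.1
    (hb S'ᶜ (by rw [Finset.card_compl]; lia)) _ hrelz
  refine Fintype.linearIndependent_iff.1 hy g (funext fun v => ?_)
  by_cases hv : v ∈ S'
  · simpa using hz v hv
  · simpa using hzc v (Finset.mem_compl.2 hv)

theorem IsUniform.exists_gale [Fintype V] {b : V → Fin m → K} (hb : IsUniform b)
    (hsum : ∑ v, b v = 0) (hcard : Fintype.card V = d + 1 + m) :
    ∃ p : V → Fin d → K, IsUniform (homogenize p) ∧ ∀ i, ∑ v, p v i • b v = 0 := by
  obtain ⟨v₀⟩ : Nonempty V := Fintype.card_pos_iff.1 (by lia)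
  let T : (V → K) →ₗ[K] (Fin m → K) × K :=
    (Fintype.linearCombination K b).prod (LinearMap.proj v₀)
  have hdim : d ≤ Module.finrank K (LinearMap.ker T) := by
    have hker := LinearMap.finrank_range_add_finrank_ker T
    have hrange := Submodule.finrank_le (LinearMap.range T)
    rw [Module.finrank_fintype_fun_eq_card] at hker
    rw [Module.finrank_prod, Module.finrank_fin_fun, Module.finrank_self] at hrange
    lia
  let y : Fin d → V → K := fun i => Module.finBasis K (LinearMap.ker T) (Fin.castLE hdim i)
  have hy : LinearIndependent K y :=
    ((Module.finBasis K _).linearIndependent.comp _ (Fin.castLE_injective hdim)).map'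
      (LinearMap.ker T).subtype (Submodule.ker_subtype _)
  have hyT (i : Fin d) : ∑ v, y i v • b v = 0 ∧ y i v₀ = 0 :=
    Prod.ext_iff.1 (show T (y i) = 0 from (Module.finBasis K (LinearMap.ker T) _).2)
  have hone : (1 : V → K) ∉ Submodule.span K (Set.range y) := fun hmem => by
    have hle : Submodule.span K (Set.range y) ≤ LinearMap.ker (LinearMap.proj v₀) :=
      Submodule.span_le.2 (Set.range_subset_iff.2 fun i => (hyT i).2)
    exact one_ne_zero (hle hmem)
  refine ⟨fun v i => y i v, hb.of_relations hcard ?_ ?_, fun i => (hyT i).1⟩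
  · have heq : (fun (i : Fin (d + 1)) v => homogenize (fun v i => y i v) v i) = Fin.cons 1 y :=
      funext <| Fin.cases rfl fun _ => rfl
    exact heq ▸ hy.finCons hone
  · refine Fin.cases ?_ (fun i => ?_)
    · simpa [homogenize] using hsum
    · exact (hyT i).1

theorem IsUniform.linearIndepOn_sub {p : V → Fin d → K} (hp : IsUniform (homogenize p)) {v : V}
    {N : Finset V} (hv : v ∉ N) (hN : N.card ≤ d) :
    LinearIndepOn K (fun u => p u - p v) (N : Set V) := by
  classical
  refine linearIndepOn_finset_iff.2 fun f hf u hu => ?_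
  have hli := hp (insert v N) (by rw [Finset.card_insert_of_notMem hv]; lia)
  have hne {u : V} (hu : u ∈ N) : u ≠ v := fun h => hv (h ▸ hu)
  have hsum : ∑ w ∈ insert v N,
      Function.update f v (-∑ u ∈ N, f u) w • homogenize p w = 0 := by
    have hcongr (w : V) (hw : w ∈ N) :
        Function.update f v (-∑ u ∈ N, f u) w • homogenize p w = f w • homogenize p w := by
      rw [Function.update_of_ne (hne hw)]
    rw [Finset.sum_insert hv, Function.update_self, Finset.sum_congr rfl hcongr]
    refine funext fun i => Fin.cases ?_ (fun i => ?_) i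
    · simp [homogenize]
    · simpa [homogenize, mul_sub, Finset.sum_sub_distrib, ← Finset.sum_mul, neg_add_eq_sub]
        using congrFun hf i
  simpa [hne hu] using linearIndepOn_finset_iff.1 hli _ hsum u (Finset.mem_insert_of_mem hu)

end Uniform

/-! ### Complete and complete bipartite graphs -/

section CompleteGraphs

/-- The edge set of the complete bipartite graph with sides `A` and `B` (for disjoint `A`
and `B`). -/
def bicliqueOn {V : Type*} [DecidableEq V] (A B : Finset V) : Finset (Sym2 V) :=
  (A ×ˢ B).image fun t => s(t.1, t.2)

variable {V : Type*} [DecidableEq V] {A B : Finset V}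

theorem mem_cliqueOn [Fintype V] {W : Finset V} {e : Sym2 V} :
    e ∈ cliqueOn W ↔ ¬e.IsDiag ∧ ∀ v ∈ e, v ∈ W := by
  induction e with
  | _ u v =>
    simp only [cliqueOn, Finset.mem_image, Finset.mem_filter, Finset.mem_product, Prod.exists,
      Sym2.mk_isDiag_iff, Sym2.ball, Sym2.eq_iff]
    grind

theorem card_cliqueOn [Fintype V] (W : Finset V) : (cliqueOn W).card = W.card.choose 2 := by
  rw [← Sym2.card_image_offDiag, cliqueOn]
  congr 1
  ext
  simp [and_assoc]

theorem cliqueOn_mono [Fintype V] {W W' : Finset V} (h : W ⊆ W') : cliqueOn W ⊆ cliqueOn W' :=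
  fun _ he => mem_cliqueOn.2 ((mem_cliqueOn.1 he).imp_right fun he v hv => h (he v hv))

theorem cliqueOn_insert [Fintype V] {W : Finset V} {v : V} (hv : v ∉ W) :
    cliqueOn (insert v W) = cliqueOn W ∪ W.image fun u => s(v, u) := by
  ext e
  induction e with
  | _ x y =>
    simp only [Finset.mem_union, mem_cliqueOn, Finset.mem_image, Sym2.ball, Sym2.mk_isDiag_iff,
      Finset.mem_insert, Sym2.eq_iff]
    grind

theorem mk_mem_bicliqueOn {u v : V} :
    s(u, v) ∈ bicliqueOn A B ↔ u ∈ A ∧ v ∈ B ∨ v ∈ A ∧ u ∈ B := by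
  simp only [bicliqueOn, Finset.mem_image, Finset.mem_product, Prod.exists, Sym2.eq_iff]
  grind

theorem cliqueOn_univ_sdiff_bicliqueOn [Fintype V] (h : Disjoint A B) :
    cliqueOn Finset.univ \ bicliqueOn A B = cliqueOn Aᶜ ∪ cliqueOn Bᶜ := by
  have := Finset.disjoint_left.1 h
  ext e
  induction e with
  | _ u v =>
    simp only [Finset.mem_sdiff, Finset.mem_union, mem_cliqueOn, mk_mem_bicliqueOn, Sym2.ball,
      Finset.mem_compl, Finset.mem_univ]
    grind

theorem bicliqueOn_subset_iff {H : Finset (Sym2 V)} :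
    bicliqueOn A B ⊆ H ↔ ∀ a ∈ A, ∀ b ∈ B, s(a, b) ∈ H := by
  rw [bicliqueOn, Finset.image_subset_iff]
  exact ⟨fun h a ha b hb => h (a, b) (Finset.mk_mem_product ha hb),
    fun h t ht => h _ (Finset.mem_product.1 ht).1 _ (Finset.mem_product.1 ht).2⟩

theorem card_bicliqueOn (h : Disjoint A B) : (bicliqueOn A B).card = A.card * B.card := by
  rw [bicliqueOn, Finset.card_image_of_injOn, Finset.card_product]
  rintro ⟨a, b⟩ hab ⟨a', b'⟩ hab' heq
  have := Finset.disjoint_left.1 h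
  simp only [Finset.coe_product, Set.mem_prod, Finset.mem_coe, Sym2.eq_iff, Prod.mk.injEq]
    at hab hab' heq ⊢
  grind

theorem bicliqueOn_comm (A B : Finset V) : bicliqueOn A B = bicliqueOn B A := by
  ext e
  induction e with
  | _ u v => rw [mk_mem_bicliqueOn, mk_mem_bicliqueOn, or_comm, and_comm, and_comm (a := u ∈ A)]

end CompleteGraphs

/-! ### Symmetric products -/

section SymmetricProducts

/-- The symmetric product `b u * b v` of the vectors at the ends of the edge `uv`, encoded as the
symmetric matrix `(b u)(b v)ᵀ + (b v)(b u)ᵀ`. -/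
def symProd {V : Type*} {m : ℕ} (b : V → Fin m → ℝ) (e : Sym2 V) : Fin m × Fin m → ℝ :=
  Sym2.lift
    ⟨fun u v ij => b u ij.1 * b v ij.2 + b u ij.2 * b v ij.1, fun u v => by funext ij; ring⟩ e

/-- The edge set `H` is independent in the symmetric square of `ℝ ^ m`: some (equivalently, any
generic) configuration of vectors makes the symmetric products along the edges of `H` linearly
independent. -/
def SymIndep {V : Type*} (m : ℕ) (H : Finset (Sym2 V)) : Prop :=
  ∃ b : V → Fin m → ℝ, LinearIndepOn ℝ (symProd b) (H : Set (Sym2 V))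

@[simp]
theorem symProd_mk {V : Type*} {m : ℕ} (b : V → Fin m → ℝ) (u v : V) (ij : Fin m × Fin m) :
    symProd b s(u, v) ij = b u ij.1 * b v ij.2 + b u ij.2 * b v ij.1 := rfl

theorem Generic.linearIndepOn_symProd {V : Type*} {m : ℕ} {b : V → Fin m → ℝ} (hb : Generic m b)
    {H : Finset (Sym2 V)} (hH : SymIndep m H) : LinearIndepOn ℝ (symProd b) (H : Set (Sym2 V)) := by
  obtain ⟨b₀, hb₀⟩ := hH
  refine hb.linearIndepOn (fun e ij => ?_) hb₀
  induction e with
  | _ u v => exact ⟨.X (u, ij.1) * .X (v, ij.2) + .X (u, ij.2) * .X (v, ij.1), by simp⟩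

theorem SymIndep.empty {V : Type*} (m : ℕ) : SymIndep m (∅ : Finset (Sym2 V)) :=
  ⟨0, by simp⟩

theorem linearIndepOn_union_of_map {K ι M M' : Type*} [Field K] [AddCommGroup M] [Module K M]
    [AddCommGroup M'] [Module K M'] {f : ι → M} {s t : Set ι} (L : M →ₗ[K] M')
    (hs : LinearIndepOn K (fun i => L (f i)) s) (ht : LinearIndepOn K f t)
    (hL : ∀ i ∈ t, L (f i) = 0) : LinearIndepOn K f (t ∪ s) := by
  have hspan : Submodule.span K (f '' t) ≤ LinearMap.ker L :=
    Submodule.span_le.2 (Set.image_subset_iff.2 hL)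
  exact ht.union_of_quotient
    (LinearIndependent.of_comp ((Submodule.span K (f '' t)).liftQ L hspan) hs)

theorem SymIndep.of_card_le_one {V : Type*} {m : ℕ} {H : Finset (Sym2 V)} (hH : H.card ≤ 1) :
    SymIndep (m + 1) H := by
  refine ⟨1, ?_⟩
  obtain h0 | ⟨e, he⟩ := (Finset.card_le_one_iff_subsingleton.1 hH).eq_empty_or_singleton
  · simp [h0]
  · rw [he, linearIndepOn_singleton_iff]
    intro h
    induction e with
    | _ u v => simpa using congrFun h (0, 0)

theorem SymIndep.mono {V : Type*} {m : ℕ} {H H' : Finset (Sym2 V)} (hH : SymIndep m H)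
    (h : H' ⊆ H) : SymIndep m H' :=
  hH.imp fun _ hb => hb.mono (Finset.coe_subset.2 h)

theorem linearIndependent_symProd_single (m : ℕ) :
    LinearIndependent ℝ (symProd fun i : Fin m => Pi.single i (1 : ℝ)) := by
  refine Fintype.linearIndependent_iff.2 fun g hg e => ?_
  induction e with
  | _ i j =>
    have hother (e : Sym2 (Fin m)) (he : e ≠ s(i, j)) :
        symProd (fun i : Fin m => Pi.single i (1 : ℝ)) e (i, j) = 0 := by
      induction e with
      | _ k l =>
        simp only [ne_eq, Sym2.eq_iff] at he
        simp only [symProd_mk, Pi.single_apply]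
        grind
    have hself : symProd (fun i : Fin m => Pi.single i (1 : ℝ)) s(i, j) (i, j) ≠ 0 := by
      simp only [symProd_mk, Pi.single_apply]
      grind
    have hsum := congrFun hg (i, j)
    rw [Finset.sum_apply, Finset.sum_eq_single s(i, j) (fun e _ he => by simp [hother e he])
      (by simp)] at hsum
    simpa only [Pi.smul_apply, smul_eq_mul, Pi.zero_apply, mul_eq_zero, hself, or_false] using hsum

theorem exists_map_eq {V W : Type*} [Nonempty W] {H : Finset (Sym2 V)}
    (f : Sym2 V → Sym2 W) (hH : ∀ e ∈ H, ∀ e' ∈ H, ∀ v ∈ e, v ∈ e' → e = e')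
    (hs : ∀ e ∈ H, ¬e.IsDiag) : ∃ β : V → W, ∀ e ∈ H, e.map β = f e := by
  classical
  induction H using Finset.induction_on with
  | empty => exact ⟨fun _ => Classical.arbitrary W, by simp⟩
  | insert e H heH ih =>
    rw [Finset.forall_mem_insert] at hs
    obtain ⟨β, hβ⟩ := ih (fun e he e' he' => hH e (Finset.mem_insert_of_mem he) e'
      (Finset.mem_insert_of_mem he')) hs.2
    have hdisj (e' : Sym2 V) (he' : e' ∈ H) (v : V) (hv : v ∈ e) : v ∉ e' := fun hv' =>
      heH (hH e (by simp) e' (by simp [he']) v hv hv' ▸ he')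
    induction e with
    | _ x y =>
      obtain ⟨i, j, hij⟩ : ∃ i j, f s(x, y) = s(i, j) := ⟨_, _, (Quot.out_eq _).symm⟩
      refine ⟨Function.update (Function.update β x i) y j, Finset.forall_mem_insert .. |>.2
        ⟨?_, fun e' he' => (Sym2.map_congr fun v hv => ?_).trans (hβ e' he')⟩⟩
      · have hxy : x ≠ y := by simpa using hs.1
        simp [hij, hxy]
      · have hx : v ≠ x := fun h => hdisj e' he' x (by simp) (h ▸ hv)
        have hy : v ≠ y := fun h => hdisj e' he' y (by simp) (h ▸ hv)
        simp [hx, hy]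

variable {V : Type*} [DecidableEq V] {m : ℕ} {H : Finset (Sym2 V)} {v : V}

/-- The edges of `H` that remain when the vertex `v` is deleted. -/
def eraseVertex (H : Finset (Sym2 V)) (v : V) : Finset (Sym2 V) :=
  H.filter (v ∉ ·)

theorem eraseVertex_subset (H : Finset (Sym2 V)) (v : V) : eraseVertex H v ⊆ H :=
  Finset.filter_subset _ _

theorem inter_sym2_pair_subset (hs : ∀ e ∈ H, ¬e.IsDiag) (v x : V) :
    H ∩ ({v, x} : Finset V).sym2 ⊆ {s(v, x)} := fun e he => by
  induction e with
  | _ y z =>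
    have hyz : s(y, z) ∈ H → y ≠ z := fun h => by simpa using hs _ h
    simp only [Finset.mem_inter, Finset.mk_mem_sym2_iff, Finset.mem_insert, Finset.mem_singleton,
      Sym2.eq_iff] at he ⊢
    grind

/-- The configuration in `ℝ ^ (m + 1)` obtained from `b` by moving `v` to the origin and adding a
first coordinate, which is `1` on `T` and `0` elsewhere. -/
def extendConfig (b : V → Fin m → ℝ) (T : Finset V) (v x : V) : Fin (m + 1) → ℝ :=
  Fin.cons (if x ∈ T then 1 else 0) (if x = v then 0 else b x)

theorem symProd_extendConfig_zero_zero_eq_zero_iff (b : V → Fin m → ℝ) (T : Finset V) (v : V)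
    {e : Sym2 V} : symProd (extendConfig b T v) e (0, 0) = 0 ↔ e ∉ T.sym2 := by
  induction e with
  | _ x y => simp [extendConfig, imp_not_comm]

theorem linearIndepOn_symProd_extendConfig_zero_zero (b : V → Fin m → ℝ) (T : Finset V) (v : V)
    {F : Finset (Sym2 V)} (hF : F ⊆ T.sym2) (hcard : F.card ≤ 1) :
    LinearIndepOn ℝ (fun e => symProd (extendConfig b T v) e (0, 0)) (F : Set (Sym2 V)) := by
  obtain h0 | ⟨e, he⟩ := (Finset.card_le_one_iff_subsingleton.1 hcard).eq_empty_or_singleton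
  · simp [h0]
  · rw [he, linearIndepOn_singleton_iff, ne_eq, symProd_extendConfig_zero_zero_eq_zero_iff, not_not]
    exact hF (Finset.coe_eq_singleton.1 he ▸ Finset.mem_singleton_self e)

theorem IsUniform.linearIndepOn_symProd_extendConfig_star {b : V → Fin m → ℝ} (hb : IsUniform b)
    {T N : Finset V} (hv : v ∈ T) (hNT : Disjoint N T) (hN : N.card ≤ m) :
    LinearIndepOn ℝ (symProd (extendConfig b T v))
      (N.image fun n => s(v, n) : Finset (Sym2 V)) := by
  rw [Finset.coe_image]
  refine LinearIndepOn.image_of_comp _ _ (LinearIndepOn.of_comp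
    (LinearMap.funLeft ℝ ℝ fun j => (0, Fin.succ j)) ((hb N hN).congr fun n hn => ?_))
  have hn : n ∉ T := Finset.disjoint_left.1 hNT hn
  have hnv : n ≠ v := fun h => hn (h ▸ hv)
  ext j
  simp [extendConfig, LinearMap.funLeft_apply, hv, hn, hnv]

variable [Fintype V]

/-- The neighbours of the vertex `v` in the graph with edge set `H`. -/
def neighborsIn (H : Finset (Sym2 V)) (v : V) : Finset V :=
  Finset.univ.filter fun n => s(v, n) ∈ H

@[simp]
theorem mem_neighborsIn {n : V} : n ∈ neighborsIn H v ↔ s(v, n) ∈ H := by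
  simp [neighborsIn]

theorem image_neighborsIn (H : Finset (Sym2 V)) (v : V) :
    (neighborsIn H v).image (fun n => s(v, n)) = H.filter (v ∈ ·) := by
  ext e
  simp only [Finset.mem_image, mem_neighborsIn, Finset.mem_filter]
  exact ⟨by rintro ⟨n, hn, rfl⟩; exact ⟨hn, Sym2.mem_mk_left v n⟩,
    by rintro ⟨he, n, rfl⟩; exact ⟨n, he, rfl⟩⟩

theorem card_neighborsIn (H : Finset (Sym2 V)) (v : V) :
    (neighborsIn H v).card = degIn H v := by
  rw [degIn, ← image_neighborsIn,
    Finset.card_image_of_injective _ fun _ _ h => Sym2.congr_right.1 h]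

theorem card_eraseVertex_add_degIn (H : Finset (Sym2 V)) (v : V) :
    (eraseVertex H v).card + degIn H v = H.card := by
  rw [eraseVertex, degIn, add_comm, Finset.card_filter_add_card_filter_not]

theorem degIn_mono {H' : Finset (Sym2 V)} (h : H' ⊆ H) (v : V) : degIn H' v ≤ degIn H v :=
  Finset.card_le_card (Finset.filter_subset_filter _ h)

theorem eq_image_neighborsIn_union_eraseVertex_union (H : Finset (Sym2 V)) {T : Finset V}
    (hv : v ∈ T) : H = ((neighborsIn H v \ T).image (fun n => s(v, n)) ∪
      eraseVertex H v \ T.sym2) ∪ H ∩ T.sym2 := by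
  ext e
  induction e with
  | _ x y =>
    have := Sym2.eq_swap (a := x) (b := y)
    simp only [eraseVertex, Finset.mem_union, Finset.mem_image, Finset.mem_sdiff,
      Finset.mem_filter, Finset.mem_inter, Finset.mk_mem_sym2_iff, Sym2.mem_iff, Sym2.eq_iff,
      mem_neighborsIn]
    grind

theorem SymIndep.succ_of_eraseVertex {T : Finset V} (hv : v ∈ T)
    (hT : (H ∩ T.sym2).card ≤ 1) (hN : (neighborsIn H v \ T).card ≤ m)
    (hH : SymIndep m (eraseVertex H v \ T.sym2)) : SymIndep (m + 1) H := by
  obtain ⟨b, hb⟩ := exists_generic m V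
  have hnotMem {n : V} (hn : n ∈ neighborsIn H v \ T) : n ∉ T := (Finset.mem_sdiff.1 hn).2
  have hstar := hb.isUniform.linearIndepOn_symProd_extendConfig_star hv Finset.sdiff_disjoint hN
  have hold : LinearIndepOn ℝ (fun e => LinearMap.funLeft ℝ ℝ (Prod.map Fin.succ Fin.succ)
      (symProd (extendConfig b T v) e)) (eraseVertex H v \ T.sym2 : Finset (Sym2 V)) := by
    refine (hb.linearIndepOn_symProd hH).congr fun e he => ?_
    induction e with
    | _ x y =>
      ext ij
      simp_all [eraseVertex, extendConfig, eq_comm]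
  have hone := linearIndepOn_symProd_extendConfig_zero_zero b T v
    (Finset.inter_subset_right (s₁ := H)) hT
  have hunion := linearIndepOn_union_of_map (LinearMap.proj (0, 0)) hone
    (linearIndepOn_union_of_map _ hold hstar ?_) ?_
  · refine ⟨extendConfig b T v, ?_⟩
    rw [eq_image_neighborsIn_union_eraseVertex_union H hv]
    exact_mod_cast hunion
  · intro e he
    obtain ⟨n, hn, rfl⟩ := Finset.mem_image.1 he
    have hnv : n ≠ v := fun h => hnotMem hn (h ▸ hv)
    ext ij
    simp [extendConfig, LinearMap.funLeft_apply, hnv]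
  · rintro e (he | he)
    · obtain ⟨n, hn, rfl⟩ := Finset.mem_image.1 he
      exact (symProd_extendConfig_zero_zero_eq_zero_iff b T v).2 fun h =>
        hnotMem hn (Finset.mk_mem_sym2_iff.1 h).2
    · exact (symProd_extendConfig_zero_zero_eq_zero_iff b T v).2 (Finset.mem_sdiff.1 he).2

theorem SymIndep.succ_of_degIn_le (hs : ∀ e ∈ H, ¬e.IsDiag) (hv : degIn H v ≤ m + 1)
    (hH : SymIndep m (eraseVertex H v)) : SymIndep (m + 1) H := by
  obtain ⟨x, hx⟩ : ∃ x, (neighborsIn H v \ {v, x}).card ≤ m := by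
    rw [← card_neighborsIn] at hv
    obtain h0 | ⟨x, hx⟩ := (neighborsIn H v).eq_empty_or_nonempty
    · exact ⟨v, by simp [h0]⟩
    · have hsub : neighborsIn H v \ {v, x} ⊆ (neighborsIn H v).erase x := by grind
      exact ⟨x, (Finset.card_le_card hsub).trans (by rw [Finset.card_erase_of_mem hx]; lia)⟩
  exact succ_of_eraseVertex (T := {v, x}) (by simp)
    ((Finset.card_le_card (inter_sym2_pair_subset hs v x)).trans (by simp)) hx
    (hH.mono Finset.sdiff_subset)

theorem SymIndep.succ_of_edge {e : Sym2 V} (hs : ∀ e ∈ H, ¬e.IsDiag)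
    (hve : ∀ u ∈ e, s(v, u) ∉ H) (hv : degIn H v ≤ m)
    (hH : SymIndep m ((eraseVertex H v).erase e)) : SymIndep (m + 1) H := by
  refine succ_of_eraseVertex (v := v) (T := insert v e.toFinset) (by simp) ?_ ?_ (hH.mono ?_)
  · have hsub : H ∩ (insert v e.toFinset).sym2 ⊆ {e} := fun f hf => by
      induction e with
      | _ x y =>
        induction f with
        | _ a b =>
          have hab : s(a, b) ∈ H → a ≠ b := fun h => by simpa using hs _ h
          have hswap := Sym2.eq_swap (a := a) (b := b)
          simp only [Finset.mem_inter, Finset.mk_mem_sym2_iff, Finset.mem_insert,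
            Sym2.mem_toFinset, Finset.mem_singleton, Sym2.eq_iff, Sym2.mem_iff] at hf hve ⊢
          grind
    exact (Finset.card_le_card hsub).trans (by simp)
  · exact (Finset.card_le_card Finset.sdiff_subset).trans ((card_neighborsIn H v).trans_le hv)
  · intro f hf
    rw [Finset.mem_sdiff, Finset.mem_sym2_iff] at hf
    refine Finset.mem_erase.2 ⟨?_, hf.1⟩
    rintro rfl
    exact hf.2 fun u hu => by simp [hu]

theorem eq_of_degIn_le_one (hdeg : ∀ v, degIn H v ≤ 1) {e e' : Sym2 V} (he : e ∈ H) (he' : e' ∈ H)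
    (hv : v ∈ e) (hv' : v ∈ e') : e = e' :=
  Finset.card_le_one.1 (hdeg v) e (by simp [he, hv]) e' (by simp [he', hv'])

theorem SymIndep.of_degIn_le_one (hs : ∀ e ∈ H, ¬e.IsDiag) (hdeg : ∀ v, degIn H v ≤ 1)
    (hH : H.card ≤ (m + 1).choose 2) : SymIndep m H := by
  obtain rfl | hne := H.eq_empty_or_nonempty
  · exact .empty m
  have : NeZero m := ⟨by rintro rfl; simpa using hH.trans_lt' hne.card_pos⟩
  obtain ⟨f, -, hf⟩ := H.finite_toSet.exists_injOn_of_encard_le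
    (t := (Set.univ : Set (Sym2 (Fin m)))) (by
      rw [Set.encard_univ, ENat.card_eq_coe_fintype_card, Sym2.card, Fintype.card_fin,
        Set.encard_coe_eq_coe_finsetCard]
      exact_mod_cast hH)
  obtain ⟨β, hβ⟩ := exists_map_eq f
    (fun e he e' he' v hv hv' => eq_of_degIn_le_one hdeg he he' hv hv') hs
  have hsymProd (e : Sym2 V) : symProd (fun v => Pi.single (β v) 1) e =
      symProd (fun i : Fin m => Pi.single i (1 : ℝ)) (e.map β) := by
    induction e with
    | _ x y => rfl
  refine ⟨fun v => Pi.single (β v) 1, LinearIndepOn.congr ?_ fun e _ => (hsymProd e).symm⟩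
  exact (linearIndependent_symProd_single m).comp (fun e : (H : Set (Sym2 V)) => (e : Sym2 V).map β)
    fun e e' h => Subtype.ext (hf e.2 e'.2 (by rwa [← hβ e e.2, ← hβ e' e'.2]))

theorem card_erase_eraseVertex_add_degIn {e : Sym2 V} (he : e ∈ H) (hve : ∀ u ∈ e, s(v, u) ∉ H) :
    ((eraseVertex H v).erase e).card + degIn H v + 1 = H.card := by
  have hv : v ∉ e := by
    rintro ⟨u, rfl⟩
    exact hve u (Sym2.mem_mk_right v u) he
  have he' : e ∈ eraseVertex H v := Finset.mem_filter.2 ⟨he, hv⟩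
  rw [← card_eraseVertex_add_degIn H v, ← Finset.card_erase_add_one he']
  lia

theorem card_le_degIn_mul {D : ℕ} (hdeg : ∀ u, degIn H u ≤ D)
    (hcover : ∀ e ∈ H, ∃ u ∈ e, s(v, u) ∈ H) : H.card ≤ degIn H v * D := by
  have hsub : H ⊆ (neighborsIn H v).biUnion fun u => H.filter (u ∈ ·) := fun e he => by
    simpa [he, and_comm] using hcover e he
  rw [← card_neighborsIn]
  exact (Finset.card_le_card hsub).trans
    (Finset.card_biUnion_le_card_mul _ _ D fun u _ => hdeg u)

theorem SymIndep.of_degIn_le_two (hs : ∀ e ∈ H, ¬e.IsDiag) (hdeg : ∀ v, degIn H v ≤ 2)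
    (hH : H.card ≤ 3 * m) : SymIndep (m + 1) H := by
  induction m generalizing H with
  | zero => exact of_card_le_one (by lia)
  | succ m ih =>
    by_cases! hmatching : ∀ v, degIn H v ≤ 1
    · refine of_degIn_le_one hs hmatching (hH.trans ?_)
      rw [Nat.choose_two_right, Nat.le_div_iff_mul_le two_pos]
      simp only [Nat.add_sub_cancel]
      nlinarith [Nat.le_self_pow two_ne_zero m]
    obtain ⟨v, hv⟩ := hmatching
    have hv : degIn H v = 2 := le_antisymm (hdeg v) hv
    have hsub := eraseVertex_subset H v
    have hcard := card_eraseVertex_add_degIn H v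
    obtain rfl | hm := m.eq_zero_or_pos
    · exact succ_of_degIn_le hs hv.le (of_card_le_one (by lia))
    by_cases! hcover : ∀ e ∈ H, ∃ u ∈ e, s(v, u) ∈ H
    · have := card_le_degIn_mul hdeg hcover
      exact succ_of_degIn_le hs (by lia) <| ih (fun e he => hs e (hsub he))
        (fun w => (degIn_mono hsub w).trans (hdeg w)) (by lia)
    · obtain ⟨e, he, hve⟩ := hcover
      have hsub := (Finset.erase_subset e _).trans hsub
      have := card_erase_eraseVertex_add_degIn he hve
      exact succ_of_edge hs hve (by lia) <| ih (fun e he => hs e (hsub he))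
        (fun w => (degIn_mono hsub w).trans (hdeg w)) (by lia)

theorem degIn_eraseVertex_self (H : Finset (Sym2 V)) (v : V) : degIn (eraseVertex H v) v = 0 := by
  simp [degIn, eraseVertex, Finset.filter_filter]

theorem degIn_eraseVertex_lt {w : V} (h : s(v, w) ∈ H) :
    degIn (eraseVertex H v) w < degIn H w := by
  refine Finset.card_lt_card (Finset.ssubset_iff_of_subset
    (Finset.filter_subset_filter _ (eraseVertex_subset H v)) |>.2 ⟨s(v, w), ?_, ?_⟩)
  · simp [h]
  · simp [eraseVertex]

theorem degIn_add_degIn_le_card {w : V} (hvw : v ≠ w) (h : s(v, w) ∉ H) :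
    degIn H v + degIn H w ≤ H.card := by
  have hdisj : Disjoint (H.filter (v ∈ ·)) (H.filter (w ∈ ·)) := by
    refine Finset.disjoint_left.2 fun e he he' => h ?_
    rw [Finset.mem_filter] at he he'
    exact (Sym2.mem_and_mem_iff hvw).1 ⟨he.2, he'.2⟩ ▸ he.1
  rw [degIn, degIn, ← Finset.card_union_of_disjoint hdisj]
  exact Finset.card_le_card
    (Finset.union_subset (Finset.filter_subset _ _) (Finset.filter_subset _ _))

theorem SymIndep.three_of_degIn_le_three (hs : ∀ e ∈ H, ¬e.IsDiag) (hdeg : ∀ v, degIn H v ≤ 3)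
    (hadj : ∀ v w, v ≠ w → degIn H v = 3 → degIn H w = 3 → s(v, w) ∈ H) (hH : H.card ≤ 6) :
    SymIndep 3 H := by
  by_cases! h3 : ∀ v, degIn H v ≤ 2
  · exact of_degIn_le_two hs h3 hH
  obtain ⟨v, hv⟩ := h3
  have hv : degIn H v = 3 := le_antisymm (hdeg v) hv
  have hsub := eraseVertex_subset H v
  have hcard := card_eraseVertex_add_degIn H v
  refine succ_of_degIn_le hs hv.le (of_degIn_le_two (fun e he => hs e (hsub he)) (fun w => ?_)
    (by lia))
  obtain rfl | hvw := eq_or_ne v w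
  · simp [degIn_eraseVertex_self]
  have hle := degIn_mono hsub w
  obtain hw | hw := (hdeg w).lt_or_eq
  · lia
  · have := degIn_eraseVertex_lt (hadj v w hvw hv hw)
    lia

theorem neighborsIn_eq_of_degIn_eraseVertex {D : ℕ} {w : V} (hdeg : ∀ w, degIn H w ≤ D)
    (hcover : ∀ e ∈ H, ∃ u ∈ e, s(v, u) ∈ H) (hv : degIn H v = D)
    (hw : degIn (eraseVertex H v) w = D) : neighborsIn H w = neighborsIn H v := by
  have hvw : s(v, w) ∉ H := fun h =>
    (degIn_eraseVertex_lt h).not_ge ((hdeg w).trans hw.ge)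
  refine Finset.eq_of_subset_of_card_le (fun x hx => ?_) ?_
  · obtain ⟨u, hu, hvu⟩ := hcover _ (mem_neighborsIn.1 hx)
    obtain rfl | rfl := Sym2.mem_iff.1 hu
    · exact absurd hvu hvw
    · exact mem_neighborsIn.2 hvu
  · rw [card_neighborsIn, card_neighborsIn, hv, ← hw]
    exact degIn_mono (eraseVertex_subset H v) w

theorem exists_eq_bicliqueOn {a b : V} (hs : ∀ e ∈ H, ¬e.IsDiag) (hdeg : ∀ v, degIn H v ≤ 3)
    (hH : H.card ≤ 9) (hcover : ∀ e ∈ H, ∃ u ∈ e, s(v, u) ∈ H) (hv : degIn H v = 3) (hab : a ≠ b)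
    (ha : degIn (eraseVertex H v) a = 3) (hb : degIn (eraseVertex H v) b = 3) :
    ∃ A B : Finset V, A.card = 3 ∧ B.card = 3 ∧ Disjoint A B ∧ H = bicliqueOn A B := by
  have hne {w : V} (hw : degIn (eraseVertex H v) w = 3) : v ≠ w := by
    rintro rfl
    simp [degIn_eraseVertex_self] at hw
  have hA : ({v, a, b} : Finset V).card = 3 :=
    Finset.card_eq_three.2 ⟨v, a, b, hne ha, hne hb, hab, rfl⟩
  have hB : (neighborsIn H v).card = 3 := (card_neighborsIn H v).trans hv
  have hsub : bicliqueOn {v, a, b} (neighborsIn H v) ⊆ H := by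
    refine bicliqueOn_subset_iff.2 fun x hx y hy => mem_neighborsIn.1 ?_
    obtain rfl | rfl | rfl : x = v ∨ x = a ∨ x = b := by simpa using hx
    · exact hy
    · rwa [neighborsIn_eq_of_degIn_eraseVertex hdeg hcover hv ha]
    · rwa [neighborsIn_eq_of_degIn_eraseVertex hdeg hcover hv hb]
  have hdisj : Disjoint {v, a, b} (neighborsIn H v) := Finset.disjoint_left.2 fun x hx hx' =>
    hs s(x, x) (bicliqueOn_subset_iff.1 hsub x hx x hx') rfl
  refine ⟨_, _, hA, hB, hdisj, (Finset.eq_of_subset_of_card_le hsub ?_).symm⟩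
  rwa [card_bicliqueOn hdisj, hA, hB]

theorem SymIndep.four_of_degIn_le_three (hs : ∀ e ∈ H, ¬e.IsDiag) (hdeg : ∀ v, degIn H v ≤ 3)
    (hH : H.card ≤ 9) : SymIndep 4 H ∨
      ∃ A B : Finset V, A.card = 3 ∧ B.card = 3 ∧ Disjoint A B ∧ H = bicliqueOn A B := by
  by_cases! h3 : ∀ v, degIn H v ≤ 2
  · exact .inl (of_degIn_le_two hs h3 hH)
  obtain ⟨v, hv⟩ := h3
  have hv : degIn H v = 3 := le_antisymm (hdeg v) hv
  have hsub := eraseVertex_subset H v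
  by_cases! hcover : ∀ e ∈ H, ∃ u ∈ e, s(v, u) ∈ H
  · by_cases! hadj : ∀ a b, a ≠ b → degIn (eraseVertex H v) a = 3 →
        degIn (eraseVertex H v) b = 3 → s(a, b) ∈ eraseVertex H v
    · have := card_eraseVertex_add_degIn H v
      exact .inl <| succ_of_degIn_le hs (by lia) <| three_of_degIn_le_three
        (fun e he => hs e (hsub he)) (fun w => (degIn_mono hsub w).trans (hdeg w)) hadj (by lia)
    · obtain ⟨a, b, hab, ha, hb, -⟩ := hadj
      exact .inr (exists_eq_bicliqueOn hs hdeg hH hcover hv hab ha hb)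
  · obtain ⟨e, he, hve⟩ := hcover
    have := card_erase_eraseVertex_add_degIn he hve
    have hsub := (Finset.erase_subset e _).trans hsub
    refine .inl <| succ_of_edge hs hve hv.le <| three_of_degIn_le_three
      (fun e he => hs e (hsub he)) (fun w => (degIn_mono hsub w).trans (hdeg w))
      (fun a b hab ha hb => ?_) (by lia)
    by_contra h
    have := degIn_add_degIn_le_card hab h
    lia

theorem SymIndep.or_exists_eq_bicliqueOn (hm : m ≤ 4) (hs : ∀ e ∈ H, ¬e.IsDiag)
    (hdeg : ∀ v, degIn H v < m) (hH : H.card < (m + 1).choose 2) : SymIndep m H ∨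
      m = 4 ∧ ∃ A B : Finset V, A.card = 3 ∧ B.card = 3 ∧ Disjoint A B ∧ H = bicliqueOn A B := by
  interval_cases m
  · simp at hH
  · exact .inl (of_degIn_le_one hs (fun v => (hdeg v).le) hH.le)
  · exact .inl (of_degIn_le_one hs (fun v => Nat.le_of_lt_succ (hdeg v)) hH.le)
  · exact .inl (of_degIn_le_two hs (fun v => Nat.le_of_lt_succ (hdeg v)) hH.le)
  · exact (four_of_degIn_le_three hs (fun v => Nat.le_of_lt_succ (hdeg v))
      (Nat.le_of_lt_succ hH)).imp_right fun h => ⟨rfl, h⟩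

theorem mem_bicliqueOn_of_degIn_le {A B : Finset V} (hAB : bicliqueOn A B ⊆ H) (hv : v ∈ A)
    (hdeg : degIn H v ≤ B.card) {w : V} (hvw : s(v, w) ∈ H) : s(v, w) ∈ bicliqueOn A B := by
  have hB : B = neighborsIn H v := by
    refine Finset.eq_of_subset_of_card_le (fun b hb => ?_) ((card_neighborsIn H v).trans_le hdeg)
    exact mem_neighborsIn.2 (bicliqueOn_subset_iff.1 hAB v hv b hb)
  exact mk_mem_bicliqueOn.2 (.inl ⟨hv, hB ▸ mem_neighborsIn.2 hvw⟩)

theorem SymIndep.insert_erase_bicliqueOn {A B : Finset V} (hA : A.card = 3) (hB : B.card = 3)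
    (hdisj : Disjoint A B) (hs : ∀ e ∈ H, ¬e.IsDiag) (hdeg : ∀ v, degIn H v ≤ 3)
    (hAB : bicliqueOn A B ⊆ H) {e f : Sym2 V} (he : e ∈ bicliqueOn A B) (hf : f ∈ H)
    (hfAB : f ∉ bicliqueOn A B) : SymIndep 4 (insert f ((bicliqueOn A B).erase e)) := by
  have hsub : insert f ((bicliqueOn A B).erase e) ⊆ H :=
    Finset.insert_subset hf ((Finset.erase_subset _ _).trans hAB)
  have hcard : (insert f ((bicliqueOn A B).erase e)).card ≤ 9 := by
    refine (Finset.card_insert_le _ _).trans ?_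
    rw [Finset.card_erase_of_mem he, card_bicliqueOn hdisj, hA, hB]
  refine (four_of_degIn_le_three (fun e he => hs e (hsub he))
    (fun v => (degIn_mono hsub v).trans (hdeg v)) hcard).resolve_right ?_
  rintro ⟨A', B', hA', hB', hdisj', heq⟩
  obtain ⟨⟨x, y⟩, hxy, rfl⟩ := Finset.mem_image.1
    (show f ∈ bicliqueOn A' B' from heq ▸ Finset.mem_insert_self _ _)
  rw [Finset.mem_product] at hxy
  obtain ⟨y', hy', hne⟩ := Finset.exists_mem_ne (show 1 < B'.card by lia) y
  have hmem : s(x, y') ∈ bicliqueOn A B := by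
    have hxy' : s(x, y') ∈ bicliqueOn A' B' := mk_mem_bicliqueOn.2 (.inl ⟨hxy.1, hy'⟩)
    rw [← heq] at hxy'
    exact Finset.mem_of_mem_erase
      (Finset.mem_of_mem_insert_of_ne hxy' fun h => hne (Sym2.congr_right.1 h))
  obtain ⟨hx, -⟩ | ⟨-, hx⟩ := mk_mem_bicliqueOn.1 hmem
  · exact hfAB (mem_bicliqueOn_of_degIn_le hAB hx (hB ▸ hdeg x) hf)
  · rw [bicliqueOn_comm] at hAB hfAB
    exact hfAB (mem_bicliqueOn_of_degIn_le hAB hx (hA ▸ hdeg x) hf)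

end SymmetricProducts

/-! ### Equilibrium stresses -/

section Stresses

variable {V : Type*} [Fintype V] {d m : ℕ} {p : V → Fin d → ℝ}

/-- `ω` is an equilibrium stress of the complete framework on the points `p`. The diagonal values
of `ω` are irrelevant. -/
def IsStress (p : V → Fin d → ℝ) (ω : Sym2 V → ℝ) : Prop :=
  ∀ w, ∑ v, ω s(w, v) • (p w - p v) = 0

theorem isStress_symProd {b : V → Fin m → ℝ} (hsum : ∑ v, b v = 0)
    (hp : ∀ i, ∑ v, p v i • b v = 0) (φ : (Fin m × Fin m → ℝ) →ₗ[ℝ] ℝ) :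
    IsStress p fun e => φ (symProd b e) := by
  refine fun w => funext fun i => ?_
  have hrel (j : Fin m) : ∑ v, (p w i - p v i) * b v j = 0 := by
    simp only [sub_mul, Finset.sum_sub_distrib, ← Finset.mul_sum]
    simpa [Finset.sum_apply] using
      congrArg₂ (p w i * · - ·) (congrFun hsum j) (congrFun (hp i) j)
  have hzero : ∑ v, (p w i - p v i) • symProd b s(w, v) = 0 := by
    ext jk
    calc (∑ v, (p w i - p v i) • symProd b s(w, v)) jk
        = b w jk.1 * ∑ v, (p w i - p v i) * b v jk.2 +
          b w jk.2 * ∑ v, (p w i - p v i) * b v jk.1 := by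
          simp only [Finset.sum_apply, Pi.smul_apply, smul_eq_mul, symProd_mk, Finset.mul_sum,
            ← Finset.sum_add_distrib]
          exact Finset.sum_congr rfl fun v _ => by ring
      _ = 0 := by simp only [hrel, mul_zero, add_zero]
  calc (∑ v, φ (symProd b s(w, v)) • (p w - p v)) i
      = ∑ v, φ (symProd b s(w, v)) * (p w i - p v i) := Finset.sum_apply _ _ _
    _ = φ (∑ v, (p w i - p v i) • symProd b s(w, v)) := by
        simp only [map_sum, map_smul, smul_eq_mul, mul_comm]
    _ = 0 := by rw [hzero, map_zero]

end Stresses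

/-! ### The rigidity matroid -/

section Rigidity

variable {V : Type*} [DecidableEq V] {d : ℕ} {p : V → Fin d → ℝ}

theorem rigRow_mk (p : V → Fin d → ℝ) (u v : V) (wi : V × Fin d) :
    rigRow d p s(u, v) wi =
      ((if wi.1 = u then 1 else 0) - (if wi.1 = v then 1 else 0)) * (p u wi.2 - p v wi.2) :=
  rfl

theorem rigRow_mk_left (p : V → Fin d → ℝ) (u v : V) (i : Fin d) :
    rigRow d p s(u, v) (u, i) = p u i - p v i := by
  obtain rfl | huv := eq_or_ne u v <;> simp [rigRow_mk, *]

theorem rigRow_of_notMem (p : V → Fin d → ℝ) {e : Sym2 V} {v : V} (hv : v ∉ e) (i : Fin d) :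
    rigRow d p e (v, i) = 0 := by
  induction e with
  | _ a b =>
    rw [Sym2.mem_iff, not_or] at hv
    simp [rigRow_mk, hv]

theorem rigRow_of_isDiag (p : V → Fin d → ℝ) {e : Sym2 V} (he : e.IsDiag) : rigRow d p e = 0 := by
  induction e with
  | _ a b =>
    obtain rfl : a = b := he
    exact funext fun wi => by simp [rigRow_mk]

variable [Fintype V]

theorem rrk_mono (p : V → Fin d → ℝ) {F F' : Set (Sym2 V)} (h : F ⊆ F') :
    rrk d p F ≤ rrk d p F' :=
  Submodule.finrank_mono (Submodule.span_mono (Set.image_mono h))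

theorem rrk_le_of_rigRow_mem_span {F F' : Set (Sym2 V)}
    (h : ∀ e ∈ F, rigRow d p e ∈ Submodule.span ℝ (rigRow d p '' F')) :
    rrk d p F ≤ rrk d p F' :=
  Submodule.finrank_mono (Submodule.span_le.2 (Set.forall_mem_image.2 h))

theorem rrk_union_le (p : V → Fin d → ℝ) (F : Set (Sym2 V)) (J : Finset (Sym2 V)) :
    rrk d p (F ∪ J) ≤ rrk d p F + J.card := by
  classical
  rw [rrk, Set.image_union, Submodule.span_union]
  refine (Submodule.finrank_add_le_finrank_add_finrank _ _).trans (Nat.add_le_add_left ?_ _)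
  have hJ := finrank_span_finset_le_card (R := ℝ) (J.image (rigRow d p))
  rw [Set.finrank, Finset.coe_image] at hJ
  exact hJ.trans Finset.card_image_le

theorem Generic.rrk_le (hp : Generic d p) (p₀ : V → Fin d → ℝ) (F : Set (Sym2 V)) :
    rrk d p₀ F ≤ rrk d p F := by
  classical
  obtain ⟨s, hsF, -, hspan, hs⟩ := exists_linearIndepOn_extension
    (linearIndepOn_empty ℝ (rigRow d p₀)) (Set.empty_subset F)
  lift s to Finset (Sym2 V) using s.toFinite
  have hpoly (e : Sym2 V) (wi : V × Fin d) : ∃ P : MvPolynomial (V × Fin d) ℚ, ∀ q,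
      rigRow d q e wi = MvPolynomial.aeval (fun vi : V × Fin d => q vi.1 vi.2) P := by
    induction e with
    | _ u v =>
      refine ⟨((if wi.1 = u then 1 else 0) - (if wi.1 = v then 1 else 0)) *
        (.X (u, wi.2) - .X (v, wi.2)), fun q => ?_⟩
      rw [rigRow_mk]
      split_ifs <;> simp
  have hrank {q : V → Fin d → ℝ} (hq : LinearIndepOn ℝ (rigRow d q) (s : Set (Sym2 V))) :
      rrk d q s = s.card := by
    rw [rrk, Set.image_eq_range]
    exact (finrank_span_eq_card hq).trans (Fintype.card_coe s)
  calc rrk d p₀ F ≤ rrk d p₀ s := rrk_le_of_rigRow_mem_span fun e he => hspan ⟨e, he, rfl⟩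
    _ = rrk d p s := by rw [hrank hs, hrank (hp.linearIndepOn hpoly hs)]
    _ ≤ rrk d p F := rrk_mono p hsF

theorem IsUniform.rrk_add_card_le (hp : IsUniform (homogenize p)) {v : V} {F : Set (Sym2 V)}
    (hF : ∀ e ∈ F, v ∉ e) {N : Finset V} (hv : v ∉ N) (hN : N.card ≤ d) :
    rrk d p F + N.card ≤ rrk d p (F ∪ N.image fun u => s(v, u)) := by
  let π : (V × Fin d → ℝ) →ₗ[ℝ] Fin d → ℝ := LinearMap.funLeft ℝ ℝ (Prod.mk v)
  let W := Submodule.span ℝ (rigRow d p '' (F ∪ N.image fun u => s(v, u)))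
  have hrange : N.card ≤ Module.finrank ℝ (LinearMap.range (π.domRestrict W)) := by
    rw [← Fintype.card_coe N]
    refine (finrank_span_eq_card (hp.linearIndepOn_sub hv hN).neg).ge.trans
      (Submodule.finrank_mono (Submodule.span_le.2 ?_))
    rintro _ ⟨u, rfl⟩
    refine ⟨⟨rigRow d p s(v, u), Submodule.subset_span ⟨_, Or.inr ?_, rfl⟩⟩, ?_⟩
    · exact Finset.mem_coe.2 (Finset.mem_image_of_mem _ u.2)
    · ext i
      simp [π, LinearMap.funLeft_apply, rigRow_mk_left]
  have hker : rrk d p F ≤ Module.finrank ℝ (LinearMap.ker (π.domRestrict W)) := by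
    have hle : Submodule.span ℝ (rigRow d p '' F) ≤ W :=
      Submodule.span_mono (Set.image_mono Set.subset_union_left)
    rw [rrk, ← (Submodule.comapSubtypeEquivOfLe hle).finrank_eq, LinearMap.ker_domRestrict]
    refine Submodule.finrank_mono (Submodule.comap_mono (Submodule.span_le.2 ?_))
    rintro _ ⟨e, he, rfl⟩
    exact funext fun i => rigRow_of_notMem p (hF e he) i
  have := LinearMap.finrank_range_add_finrank_ker (π.domRestrict W)
  change rrk d p F + N.card ≤ Module.finrank ℝ W
  lia

theorem IsStress.sum_smul_rigRow {ω : Sym2 V → ℝ} (hω : IsStress p ω) :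
    ∑ e, ω e • rigRow d p e = 0 := by
  ext ⟨w, i⟩
  have hinj : Function.Injective fun u => s(w, u) := fun _ _ => Sym2.congr_right.1
  have hout (e : Sym2 V) (he : e ∉ Set.range fun u => s(w, u)) :
      ω e * rigRow d p e (w, i) = 0 := by
    rw [rigRow_of_notMem p (fun ⟨u, hu⟩ => he ⟨u, hu.symm⟩), mul_zero]
  calc (∑ e, ω e • rigRow d p e) (w, i)
      = ∑ e, ω e * rigRow d p e (w, i) := Finset.sum_apply _ _ _
    _ = ∑ v, ω s(w, v) * (p w i - p v i) :=
        (Fintype.sum_of_injective _ hinj _ _ hout fun v => by rw [rigRow_mk_left]).symm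
    _ = (∑ v, ω s(w, v) • (p w - p v)) i := by simp
    _ = 0 := congrFun (hω w) i

theorem IsStress.rigRow_mem_span {ω : Sym2 V → ℝ} (hω : IsStress p ω) {e : Sym2 V} (he : ω e ≠ 0)
    {F : Set (Sym2 V)} (hF : ∀ f ≠ e, ¬f.IsDiag → ω f ≠ 0 → f ∈ F) :
    rigRow d p e ∈ Submodule.span ℝ (rigRow d p '' F) := by
  have hsum := hω.sum_smul_rigRow
  rw [← Finset.add_sum_erase _ _ (Finset.mem_univ e)] at hsum
  rw [← Submodule.smul_mem_iff _ he, eq_neg_of_add_eq_zero_left hsum]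
  refine Submodule.neg_mem _ (Submodule.sum_mem _ fun f hf => ?_)
  by_cases hdiag : f.IsDiag
  · simp [rigRow_of_isDiag p hdiag]
  by_cases hωf : ω f = 0
  · simp [hωf]
  exact Submodule.smul_mem _ _ <| Submodule.subset_span <|
    Set.mem_image_of_mem _ (hF f (Finset.ne_of_mem_erase hf) hdiag hωf)

theorem IsUniform.rigRow_mem_span (hp : IsUniform (homogenize p)) {W : Finset V}
    (hW : d + 1 < W.card) {u v : V} (hu : u ∈ W) (hv : v ∈ W) {F : Set (Sym2 V)}
    (hF : ∀ f ∈ cliqueOn W, f ≠ s(u, v) → f ∈ F) :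
    rigRow d p s(u, v) ∈ Submodule.span ℝ (rigRow d p '' F) := by
  obtain ⟨c, hc, hsum⟩ := hp.exists_relation hW
  have htot : ∑ v, c v • homogenize p v = 0 := by
    rw [← Finset.sum_subset (Finset.subset_univ W) fun v _ hv => by
      rw [not_not.1 (mt (hc v).1 hv), zero_smul], hsum]
  have hzero : ∑ v, (fun _ : Fin 1 => c v) = 0 := by
    ext
    simpa [homogenize] using congrFun htot 0
  have hpoint (i : Fin d) : ∑ v, p v i • (fun _ : Fin 1 => c v) = 0 := by
    ext
    simpa [homogenize, mul_comm] using congrFun htot i.succ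
  refine (isStress_symProd hzero hpoint (LinearMap.proj (0, 0))).rigRow_mem_span ?_ ?_
  · simpa using ⟨(hc u).2 hu, (hc v).2 hv⟩
  · intro f hfe hdiag hf
    induction f with
    | _ x y =>
      have hxy : c x ≠ 0 ∧ c y ≠ 0 := by simpa using hf
      refine hF _ (mem_cliqueOn.2 ⟨hdiag, ?_⟩) hfe
      simpa [hc] using hxy

theorem IsUniform.rigRow_mem_span_star (hp : IsUniform (homogenize p)) {W N : Finset V} {v : V}
    (hv : v ∉ W) (hNW : N ⊆ W) (hN : N.card = min W.card d) {e : Sym2 V}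
    (he : e ∈ cliqueOn (insert v W)) :
    rigRow d p e ∈ Submodule.span ℝ
      (rigRow d p '' (↑(cliqueOn W) ∪ ↑(N.image fun u => s(v, u)))) := by
  rw [cliqueOn_insert hv, Finset.mem_union, Finset.mem_image] at he
  obtain he | ⟨u, huW, rfl⟩ := he
  · exact Submodule.subset_span (Set.mem_image_of_mem _ (Or.inl he))
  by_cases huN : u ∈ N
  · exact Submodule.subset_span
      (Set.mem_image_of_mem _ (Or.inr (Finset.mem_image_of_mem _ huN)))
  have hNd : N.card = d := by
    have := Finset.card_lt_card (hNW.ssubset_of_not_subset fun h => huN (h huW))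
    lia
  have hvN : v ∉ insert u N := fun h => hv (Finset.insert_subset huW hNW h)
  refine hp.rigRow_mem_span (W := insert v (insert u N))
    (by rw [Finset.card_insert_of_notMem hvN, Finset.card_insert_of_notMem huN, hNd]; lia)
    (by simp) (by simp) fun f hf hfe => ?_
  rw [cliqueOn_insert hvN, Finset.image_insert, Finset.mem_union, Finset.mem_insert] at hf
  obtain hf | hf | hf := hf
  · exact Or.inl (cliqueOn_mono (Finset.insert_subset huW hNW) hf)
  · exact absurd hf hfe
  · exact Or.inr hf

theorem IsUniform.rrk_cliqueOn_insert (hp : IsUniform (homogenize p)) {W : Finset V} {v : V}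
    (hv : v ∉ W) :
    rrk d p (cliqueOn (insert v W)) = rrk d p (cliqueOn W) + min W.card d := by
  obtain ⟨N, hNW, hN⟩ := Finset.exists_subset_card_eq (min_le_left W.card d)
  refine le_antisymm ?_ ?_
  · calc rrk d p (cliqueOn (insert v W))
        ≤ rrk d p (↑(cliqueOn W) ∪ ↑(N.image fun u => s(v, u))) :=
          rrk_le_of_rigRow_mem_span fun e he => hp.rigRow_mem_span_star hv hNW hN he
      _ ≤ rrk d p (cliqueOn W) + (N.image fun u => s(v, u)).card := rrk_union_le _ _ _
      _ ≤ rrk d p (cliqueOn W) + min W.card d :=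
          Nat.add_le_add_left (Finset.card_image_le.trans hN.le) _
  · have hvW : ∀ e ∈ cliqueOn W, v ∉ e := fun e he hve => hv ((mem_cliqueOn.1 he).2 v hve)
    rw [← hN]
    refine (hp.rrk_add_card_le hvW (fun h => hv (hNW h)) (by lia)).trans (rrk_mono p ?_)
    rw [cliqueOn_insert hv, Finset.coe_union]
    exact Set.union_subset_union_right _ (Finset.coe_subset.2 (Finset.image_subset_image hNW))

theorem IsUniform.rrk_cliqueOn_add_choose_two (hp : IsUniform (homogenize p)) (W : Finset V) :
    rrk d p (cliqueOn W) + (W.card - d).choose 2 = W.card.choose 2 := by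
  induction W using Finset.induction with
  | empty =>
    have hempty : cliqueOn (∅ : Finset V) = ∅ := rfl
    simp [rrk, hempty]
  | insert v W hv ih =>
    rw [hp.rrk_cliqueOn_insert hv, Finset.card_insert_of_notMem hv]
    obtain hWd | hdW := lt_or_ge W.card d
    · rw [Nat.choose_succ_succ' W.card, Nat.choose_one_right]
      rw [Nat.sub_eq_zero_of_le hWd.le] at ih
      rw [Nat.sub_eq_zero_of_le hWd, min_eq_left hWd.le, ← ih]
      lia
    · rw [Nat.succ_sub hdW, Nat.choose_succ_succ', Nat.choose_succ_succ', ← ih, min_eq_right hdW]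
      simp only [Nat.choose_one_right]
      lia

end Rigidity

/-! ### Coindependent sets of edges -/

section Coindependence

theorem IsUniform.smul {K V : Type*} [Field K] {m : ℕ} {b : V → Fin m → K} (hb : IsUniform b)
    {c : V → K} (hc : ∀ v, c v ≠ 0) : IsUniform fun v => c v • b v := fun S hS =>
  LinearIndependent.units_smul (hb S hS) fun v => Units.mk0 (c v) (hc v)

theorem symProd_smul {V : Type*} {m : ℕ} (b : V → Fin m → ℝ) (c : V → ℝ) (u v : V) :
    symProd (fun v => c v • b v) s(u, v) = (c u * c v) • symProd b s(u, v) := by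
  ext
  simp only [symProd_mk, Pi.smul_apply, smul_eq_mul]
  ring

theorem linearIndepOn_symProd_smul {V : Type*} {m : ℕ} {b : V → Fin m → ℝ} {c : V → ℝ}
    (hc : ∀ v, c v ≠ 0) {J : Set (Sym2 V)} (hJ : LinearIndepOn ℝ (symProd b) J) :
    LinearIndepOn ℝ (symProd fun v => c v • b v) J := by
  have hscale (e : Sym2 V) : ∃ a : ℝˣ, symProd (fun v => c v • b v) e = a • symProd b e := by
    induction e with
    | _ u v => exact ⟨Units.mk0 _ (mul_ne_zero (hc u) (hc v)), symProd_smul b c u v⟩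
  choose a ha using hscale
  rw [funext ha]
  exact LinearIndependent.units_smul hJ fun e => a e

variable {V : Type*} [Fintype V] [DecidableEq V] {d m : ℕ} {p : V → Fin d → ℝ}
  {J : Finset (Sym2 V)}

/-- `J` is coindependent in the rigidity matroid of the complete framework on the points `p`:
deleting the edges in `J` does not lower the rank. -/
def IsCoindep (d : ℕ) (p : V → Fin d → ℝ) (J : Finset (Sym2 V)) : Prop :=
  rrk d p ↑(cliqueOn Finset.univ \ J) = rrk d p (cliqueOn (Finset.univ : Finset V))

theorem isCoindep_iff_le :
    IsCoindep d p J ↔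
      rrk d p (cliqueOn (Finset.univ : Finset V)) ≤ rrk d p ↑(cliqueOn Finset.univ \ J) :=
  ⟨Eq.ge, (rrk_mono p (Finset.coe_subset.2 Finset.sdiff_subset)).antisymm⟩

theorem isCoindep_empty : IsCoindep d p ∅ := by rw [IsCoindep, Finset.sdiff_empty]

theorem isCoindep_of_linearIndepOn_symProd {b : V → Fin m → ℝ} (hsum : ∑ v, b v = 0)
    (hp : ∀ i, ∑ v, p v i • b v = 0) (hJ : LinearIndepOn ℝ (symProd b) (J : Set (Sym2 V))) :
    IsCoindep d p J := by
  refine isCoindep_iff_le.2 (rrk_le_of_rigRow_mem_span fun e he => ?_)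
  by_cases heJ : e ∈ J
  · obtain ⟨φ, hφe, hφ⟩ := Submodule.exists_le_ker_of_notMem
      (linearIndepOn_iff_notMem_span.1 hJ e heJ)
    refine (isStress_symProd hsum hp φ).rigRow_mem_span hφe fun f hfe hf hφf => ?_
    refine Finset.mem_coe.2 (Finset.mem_sdiff.2 ⟨mem_cliqueOn.2 ⟨hf, by simp⟩, fun hfJ => hφf ?_⟩)
    exact hφ (Submodule.subset_span (Set.mem_image_of_mem _ ⟨hfJ, hfe⟩))
  · exact Submodule.subset_span
      (Set.mem_image_of_mem _ (Finset.mem_coe.2 (Finset.mem_sdiff.2 ⟨he, heJ⟩)))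

theorem IsUniform.rrk_cliqueOn_eq (hp : IsUniform (homogenize p)) {p₀ : V → Fin d → ℝ}
    (hp₀ : IsUniform (homogenize p₀)) (W : Finset V) :
    rrk d p (cliqueOn W) = rrk d p₀ (cliqueOn W) :=
  Nat.add_right_cancel <|
    (hp.rrk_cliqueOn_add_choose_two W).trans (hp₀.rrk_cliqueOn_add_choose_two W).symm

theorem Generic.isCoindep (hp : Generic d p) {p₀ : V → Fin d → ℝ}
    (hp₀ : IsUniform (homogenize p₀)) (hJ : IsCoindep d p₀ J) : IsCoindep d p J := by
  rw [isCoindep_iff_le, hp.isUniform_homogenize.rrk_cliqueOn_eq hp₀, ← hJ]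
  exact hp.rrk_le p₀ _

theorem SymIndep.isCoindep (hJ : SymIndep m J) (hcard : Fintype.card V = d + 1 + m)
    (hp : Generic d p) : IsCoindep d p J := by
  obtain ⟨b, hb⟩ := exists_generic m V
  obtain ⟨c, hc, hsum⟩ := hb.isUniform.exists_relation (W := Finset.univ)
    (by rw [Finset.card_univ]; lia)
  have hc v : c v ≠ 0 := (hc v).2 (Finset.mem_univ v)
  obtain ⟨p₀, hp₀, hrel⟩ := (hb.isUniform.smul hc).exists_gale hsum hcard
  exact hp.isCoindep hp₀ <| isCoindep_of_linearIndepOn_symProd hsum hrel <|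
    linearIndepOn_symProd_smul hc (hb.linearIndepOn_symProd hJ)

end Coindependence

/-! ### Circuits on few vertices -/

section SmallCircuits

variable {V : Type*} [Fintype V] [DecidableEq V] {d k m : ℕ} {p : V → Fin d → ℝ}
  {E J : Finset (Sym2 V)}

theorem choose_two_add_choose_two (d m : ℕ) :
    (d + 1 + m).choose 2 + (d + 1).choose 2 = d * (d + 1 + m) + (m + 1).choose 2 := by
  qify
  rw [Nat.cast_choose_two, Nat.cast_choose_two, Nat.cast_choose_two]
  push_cast
  ring

theorem subset_cliqueOn_univ (hs : ∀ e ∈ E, ¬e.IsDiag) : E ⊆ cliqueOn Finset.univ :=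
  fun e he => mem_cliqueOn.2 ⟨hs e he, by simp⟩

theorem IsCoindep.isRigidOn (hJ : IsCoindep d p (cliqueOn Finset.univ \ E))
    (hs : ∀ e ∈ E, ¬e.IsDiag) (hp : IsUniform (homogenize p))
    (hcard : Fintype.card V = d + 1 + m) : IsRigidOn d p Finset.univ E := by
  right
  rw [IsCoindep, Finset.sdiff_sdiff_eq_self (subset_cliqueOn_univ hs)] at hJ
  have hK := hp.rrk_cliqueOn_add_choose_two Finset.univ
  have := choose_two_add_choose_two d m
  rw [← hJ, Finset.card_univ, hcard, show d + 1 + m - d = m + 1 by lia] at hK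
  rw [Finset.card_univ, hcard]
  norm_cast
  lia

theorem degIn_cliqueOn_univ_sdiff (hs : ∀ e ∈ E, ¬e.IsDiag) (v : V) :
    degIn (cliqueOn Finset.univ \ E) v + degIn E v + 1 = Fintype.card V := by
  have hv : v ∉ neighborsIn E v := fun h => hs _ (mem_neighborsIn.1 h) rfl
  have hcompl : neighborsIn (cliqueOn Finset.univ \ E) v = (insert v (neighborsIn E v))ᶜ := by
    ext u
    simp [mem_cliqueOn, eq_comm]
  rw [← card_neighborsIn, ← card_neighborsIn, hcompl, add_assoc,
    ← Finset.card_insert_of_notMem hv, Finset.card_compl_add_card]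

theorem IsKFoldCircuit.lt_degIn (hE : IsKFoldCircuit d p E k) (hs : ∀ e ∈ E, ¬e.IsDiag)
    (hp : IsUniform (homogenize p)) {v : V} (hv : ∃ e ∈ E, v ∈ e) : d < degIn E v := by
  by_contra! hdeg
  rw [← card_neighborsIn] at hdeg
  obtain ⟨_, he, w, rfl⟩ := hv
  have hw : w ∈ neighborsIn E v := mem_neighborsIn.2 he
  have hlower : rrk d p (eraseVertex E v) + (neighborsIn E v).card ≤ rrk d p E := by
    refine (hp.rrk_add_card_le (fun e he => (Finset.mem_filter.1 he).2)
      (fun h => hs _ (mem_neighborsIn.1 h) rfl) hdeg).trans (rrk_mono p ?_)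
    rw [image_neighborsIn, ← Finset.coe_union]
    exact Finset.coe_subset.2
      (Finset.union_subset (eraseVertex_subset E v) (Finset.filter_subset _ _))
  have hcover : (↑E \ {s(v, w)} : Set (Sym2 V)) ⊆
      ↑(eraseVertex E v) ∪ ↑(((neighborsIn E v).erase w).image fun u => s(v, u)) := by
    rintro e ⟨he, hew⟩
    by_cases hve : v ∈ e
    · obtain ⟨u, rfl⟩ := hve
      exact .inr <| Finset.mem_image_of_mem _ <|
        Finset.mem_erase.2 ⟨fun h => hew (h ▸ rfl), mem_neighborsIn.2 he⟩
    · exact .inl (Finset.mem_filter.2 ⟨he, hve⟩)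
  have hupper : rrk d p E ≤ rrk d p (eraseVertex E v) + ((neighborsIn E v).erase w).card :=
    calc rrk d p E = rrk d p (↑E \ {s(v, w)}) := (hE.1 _ he).symm
      _ ≤ _ := (rrk_mono p hcover).trans (rrk_union_le p _ _)
      _ ≤ _ := Nat.add_le_add_left Finset.card_image_le _
  have := Finset.card_erase_lt_of_mem hw
  lia

theorem IsKFoldCircuit.card_add_le (hE : IsKFoldCircuit d p E k) (hs : ∀ e ∈ E, ¬e.IsDiag)
    (hp : IsUniform (homogenize p)) (hcard : Fintype.card V = d + 1 + m)
    (hJE : J ⊆ cliqueOn Finset.univ \ E) (hJ : IsCoindep d p J) :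
    J.card + k ≤ (m + 1).choose 2 := by
  have hsplit : cliqueOn Finset.univ \ J = E ∪ ((cliqueOn Finset.univ \ E) \ J) := by
    have := subset_cliqueOn_univ hs
    grind
  have hrank := rrk_union_le p E ((cliqueOn Finset.univ \ E) \ J)
  rw [← Finset.coe_union, ← hsplit, hJ] at hrank
  have hK := hp.rrk_cliqueOn_add_choose_two Finset.univ
  rw [← card_cliqueOn, Finset.card_univ, hcard, show d + 1 + m - d = m + 1 by lia] at hK
  have := hE.2
  have := Finset.card_sdiff_add_card_eq_card hJE
  have := Finset.card_sdiff_add_card_eq_card (subset_cliqueOn_univ hs)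
  lia

theorem IsKFoldCircuit.exists_bicliqueOn_subset (hE : IsKFoldCircuit d p E k) (hk : 2 ≤ k)
    (hs : ∀ e ∈ E, ¬e.IsDiag) (hp : Generic d p) (hcard : Fintype.card V = d + 1 + m)
    (hm : m ≤ 4) (hdeg : ∀ v, degIn (cliqueOn Finset.univ \ E) v < m)
    (hflex : ¬IsCoindep d p (cliqueOn Finset.univ \ E)) :
    k = 2 ∧ m = 4 ∧ ∃ A B : Finset V, A.card = 3 ∧ B.card = 3 ∧ Disjoint A B ∧
      bicliqueOn A B ⊆ cliqueOn Finset.univ \ E := by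
  obtain ⟨J, hJE, hJ⟩ := exists_minimal_le_of_wellFoundedLT (¬IsCoindep d p ·) _ hflex
  obtain ⟨e, he⟩ : J.Nonempty :=
    Finset.nonempty_iff_ne_empty.2 fun h => hJ.prop (h ▸ isCoindep_empty)
  have herase : IsCoindep d p (J.erase e) := not_not.1 (hJ.not_prop_of_lt (Finset.erase_ssubset he))
  have hcardJ := hE.card_add_le hs hp.isUniform_homogenize hcard
    ((Finset.erase_subset _ _).trans hJE) herase
  rw [Finset.card_erase_of_mem he] at hcardJ
  obtain ⟨rfl, A, B, hA, hB, hAB, rfl⟩ := (SymIndep.or_exists_eq_bicliqueOn hm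
    (fun e he => (mem_cliqueOn.1 (Finset.mem_sdiff.1 (hJE he)).1).1)
    (fun v => (degIn_mono hJE v).trans_lt (hdeg v)) (by lia)).resolve_left
    fun h => hJ.prop (h.isCoindep hcard hp)
  rw [card_bicliqueOn hAB, hA, hB, show Nat.choose (4 + 1) 2 = 10 from rfl] at hcardJ
  exact ⟨by lia, rfl, A, B, hA, hB, hAB, hJE⟩

theorem IsKFoldCircuit.eq_bicliqueOn_of_subset (hE : IsKFoldCircuit d p E 2)
    (hs : ∀ e ∈ E, ¬e.IsDiag) (hp : Generic d p) (hcard : Fintype.card V = d + 1 + 4)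
    (hdeg : ∀ v, degIn (cliqueOn Finset.univ \ E) v ≤ 3) {A B : Finset V} (hA : A.card = 3)
    (hB : B.card = 3) (hdisj : Disjoint A B)
    (hAB : bicliqueOn A B ⊆ cliqueOn Finset.univ \ E) :
    cliqueOn Finset.univ \ E = bicliqueOn A B := by
  refine Finset.Subset.antisymm (fun f hf => ?_) hAB
  by_contra hfAB
  have h9 : (bicliqueOn A B).card = 9 := by rw [card_bicliqueOn hdisj, hA, hB]
  obtain ⟨e, he⟩ : (bicliqueOn A B).Nonempty := Finset.card_pos.1 (by lia)
  have hexchange : IsCoindep d p (insert f ((bicliqueOn A B).erase e)) :=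
    (SymIndep.insert_erase_bicliqueOn hA hB hdisj
      (fun e he => (mem_cliqueOn.1 (Finset.mem_sdiff.1 he).1).1)
      hdeg hAB he hf hfAB).isCoindep hcard hp
  have hle := hE.card_add_le hs hp.isUniform_homogenize hcard
    (Finset.insert_subset hf ((Finset.erase_subset _ _).trans hAB)) hexchange
  rw [Finset.card_insert_of_notMem fun h => hfAB (Finset.mem_of_mem_erase h),
    Finset.card_erase_of_mem he, h9, show Nat.choose (4 + 1) 2 = 10 from rfl] at hle
  lia

end SmallCircuits

theorem small_flexible_kfold_circuit_general
    (d k : ℕ) (hk : 2 ≤ k)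
    {V : Type*} [Fintype V] [DecidableEq V]
    (E : Finset (Sym2 V)) (hsimple : ∀ e ∈ E, ¬ e.IsDiag)
    (hcov : ∀ w : V, ∃ e ∈ E, w ∈ e)
    (hVcard : Fintype.card V ≤ d + 5)
    (p : V → Fin d → ℝ) (hp : Generic d p)
    (hE : IsKFoldCircuit d p E k)
    (hflex : ¬ IsRigidOn d p Finset.univ E) :
    k = 2 ∧
    ∃ W1 W2 : Finset V, W1.card = d + 2 ∧ W2.card = d + 2 ∧
      (W1 ∩ W2).card = d - 1 ∧ W1 ∪ W2 = Finset.univ ∧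
      E = cliqueOn W1 ∪ cliqueOn W2 := by
  have hdeg v := hE.lt_degIn hsimple hp.isUniform_homogenize (hcov v)
  have hdegsum := degIn_cliqueOn_univ_sdiff hsimple
  obtain ⟨e, -⟩ : E.Nonempty := Finset.card_pos.1 (by have := hE.2; lia)
  obtain ⟨m, hm⟩ : ∃ m, Fintype.card V = d + 1 + m :=
    Nat.exists_eq_add_of_le (by have := hdeg e.out.1; have := hdegsum e.out.1; lia)
  have hcodeg v : degIn (cliqueOn Finset.univ \ E) v < m := by
    have := hdeg v; have := hdegsum v; lia
  obtain ⟨rfl, rfl, A, B, hA, hB, hAB, hsub⟩ := hE.exists_bicliqueOn_subset hk hsimple hp hm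
    (by lia) hcodeg fun h => hflex (h.isRigidOn hsimple hp.isUniform_homogenize hm)
  have hcompl := hE.eq_bicliqueOn_of_subset hsimple hp hm
    (fun v => Nat.le_of_lt_succ (hcodeg v)) hA hB hAB hsub
  refine ⟨rfl, Aᶜ, Bᶜ, ?_, ?_, ?_, ?_, ?_⟩
  · rw [Finset.card_compl, hA, hm]; lia
  · rw [Finset.card_compl, hB, hm]; lia
  · rw [← Finset.compl_union, Finset.card_compl, Finset.card_union_of_disjoint hAB, hA, hB, hm]; lia
  · rw [← Finset.compl_inter, Finset.disjoint_iff_inter_eq_empty.1 hAB, Finset.compl_empty]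
  · rw [← cliqueOn_univ_sdiff_bicliqueOn hAB, ← hcompl,
      Finset.sdiff_sdiff_eq_self (subset_cliqueOn_univ hsimple)]

/-- Lemma 4.14: a flexible `k`-fold `R_d`-circuit on at most `d+5` vertices is
the graph `B̄_{d,d-1}`, the union of two copies of `K_{d+2}` sharing `d-1` vertices
(and `k = 2`). -/
theorem small_flexible_kfold_circuit
    (d k : ℕ) (hd : 3 ≤ d) (hk : 2 ≤ k)
    {V : Type*} [Fintype V] [DecidableEq V]
    (E : Finset (Sym2 V)) (hsimple : ∀ e ∈ E, ¬ e.IsDiag)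
    (hcov : ∀ w : V, ∃ e ∈ E, w ∈ e)
    (hVcard : Fintype.card V ≤ d + 5)
    (p : V → Fin d → ℝ) (hp : Generic d p)
    (hE : IsKFoldCircuit d p E k)
    (hflex : ¬ IsRigidOn d p Finset.univ E) :
    k = 2 ∧
    ∃ W1 W2 : Finset V, W1.card = d + 2 ∧ W2.card = d + 2 ∧
      (W1 ∩ W2).card = d - 1 ∧ W1 ∪ W2 = Finset.univ ∧
      E = cliqueOn W1 ∪ cliqueOn W2 :=
  small_flexible_kfold_circuit_general d k hk E hsimple hcov hVcard p hp hE hflex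
end
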